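/- Let G ⊆ UT(n,ℝ) be a real unipotent group, let F : ℝ^d → G be a polynomial map, and set X = F(ℝ^d). Suppose g ∈ G and H is a real algebraic subgroup of G such that gH is the minimal coset of a real algebraic subgroup of G containing X, i.e. X ⊆ gH and gH ⊆ g'H' whenever g' ∈ G, H' is a real algebraic subgroup of G and X ⊆ g'H'. Then for every lattice Γ in G there exists a real algebraic subgroup H₀ of G such that H ⊆ H₀, H₀ is Γ-rational, H₀ is contained in every Γ-rational real algebraic subgroup of G containing H, and the topological closure of the set X·Γ = {x·γ : x ∈ X, γ ∈ Γ} in G equals g·H₀·Γ. -/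

import Mathlib

open Pointwise Filter

noncomputable section

/-- Square matrices of size `n` over `R`. -/
abbrev Mat (n : ℕ) (R : Type) : Type := Matrix (Fin n) (Fin n) R

/-- The set `UT(n,ℝ)` of upper triangular matrices with `1`s on the diagonal. -/
def UTset (n : ℕ) : Set (Mat n ℝ) :=
  {A | (∀ i, A i i = 1) ∧ ∀ i j : Fin n, (j : ℕ) < (i : ℕ) → A i j = 0}

/-- The entries of a matrix, as a point of `ℝ^(n²)`. -/
def matEval {n : ℕ} (A : Mat n ℝ) : Fin n × Fin n → ℝ := fun ij => A ij.1 ij.2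

/-- A real unipotent group: a subgroup of `UT(n,ℝ)` which is the common zero set in
`UT(n,ℝ)` of a family of real polynomials in the matrix entries. -/
def IsRealUnipotentGroup (n : ℕ) (G : Set (Mat n ℝ)) : Prop :=
  (∃ S : Set (MvPolynomial (Fin n × Fin n) ℝ),
      G = {A | A ∈ UTset n ∧ ∀ p ∈ S, MvPolynomial.eval (matEval A) p = 0}) ∧
    (1 : Mat n ℝ) ∈ G ∧ (∀ a ∈ G, ∀ b ∈ G, a * b ∈ G) ∧ ∀ a ∈ G, a⁻¹ ∈ G

/-- A real algebraic subgroup of a real unipotent group `G`. -/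
def IsRealAlgSubgroup (n : ℕ) (G H : Set (Mat n ℝ)) : Prop :=
  H ⊆ G ∧ IsRealUnipotentGroup n H

/-- `N` is a normal subgroup-set of `G`. -/
def IsNormalIn (n : ℕ) (G N : Set (Mat n ℝ)) : Prop :=
  ∀ g ∈ G, ∀ x ∈ N, g * x * g⁻¹ ∈ N

/-- `Γ` is a lattice in `G`: a discrete subgroup which is cocompact, i.e. there is a
compact `K ⊆ G` with `K·Γ = G` (equivalently, `G/Γ` is compact). -/
def IsLatticeIn (n : ℕ) (G Γ : Set (Mat n ℝ)) : Prop :=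
  Γ ⊆ G ∧ (1 : Mat n ℝ) ∈ Γ ∧ (∀ a ∈ Γ, ∀ b ∈ Γ, a * b ∈ Γ) ∧ (∀ a ∈ Γ, a⁻¹ ∈ Γ) ∧
    DiscreteTopology ↥Γ ∧
    ∃ K : Set (Mat n ℝ), K ⊆ G ∧ IsCompact K ∧ ∀ g ∈ G, ∃ k ∈ K, ∃ γ ∈ Γ, g = k * γ

/-- `H` is `Γ`-rational: `Γ ∩ H` is a lattice in `H`. -/
def IsRationalFor (n : ℕ) (Γ H : Set (Mat n ℝ)) : Prop :=
  IsLatticeIn n H (Γ ∩ H)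

/-- The hyperreal matrix represented by a sequence of real matrices. -/
def matOfSeq (n : ℕ) (u : ℕ → Mat n ℝ) : Mat n Hyperreal :=
  Matrix.of fun i j => Hyperreal.ofSeq fun k => u k i j

/-- The nonstandard extension `S^♯` of a set `S` of real matrices: hyperreal matrices
represented by sequences landing in `S` on a set of indices in the ultrafilter. -/
def matSharp (n : ℕ) (S : Set (Mat n ℝ)) : Set (Mat n Hyperreal) :=
  {A | ∃ u : ℕ → Mat n ℝ, (∀ᶠ k in hyperfilter ℕ, u k ∈ S) ∧ A = matOfSeq n u}

/-- The canonical embedding of real matrices into hyperreal matrices. -/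
def matCast {n : ℕ} (A : Mat n ℝ) : Mat n Hyperreal :=
  Matrix.of fun i j => (A i j : Hyperreal)

/-- `μ(G)`: elements of `G^♯` all of whose entries are infinitesimally close to the
corresponding entries of the identity matrix. -/
def muSet (n : ℕ) (G : Set (Mat n ℝ)) : Set (Mat n Hyperreal) :=
  {A | A ∈ matSharp n G ∧ ∀ i j, Hyperreal.Infinitesimal (A i j - (1 : Mat n Hyperreal) i j)}

/-- The coset `gH` is near `α`, i.e. `α ∈ μ(G)·g·H^♯`. -/
def NearCoset (n : ℕ) (G : Set (Mat n ℝ)) (g : Mat n ℝ) (H : Set (Mat n ℝ))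
    (α : Mat n Hyperreal) : Prop :=
  α ∈ muSet n G * ({matCast g} * matSharp n H)

/-- The set of standard parts of the finite elements of a set of hyperreal matrices. -/
def matStSet (n : ℕ) (A : Set (Mat n Hyperreal)) : Set (Mat n ℝ) :=
  {B | ∃ a ∈ A, ∀ i j, Hyperreal.IsSt (a i j) (B i j)}

/-- A polynomial map `ℝ^d → Mat n ℝ`. -/
def IsPolyMapVec (d n : ℕ) (F : (Fin d → ℝ) → Mat n ℝ) : Prop :=
  ∃ P : Fin n → Fin n → MvPolynomial (Fin d) ℝ,
    ∀ x i j, F x i j = MvPolynomial.eval x (P i j)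

/-- The inclusion `ℝ →+* ℝ*` as a ring homomorphism. -/
def realHyperRingHom : ℝ →+* Hyperreal where
  toFun r := (r : Hyperreal)
  map_one' := Hyperreal.coe_one
  map_mul' := Hyperreal.coe_mul
  map_zero' := Hyperreal.coe_zero
  map_add' := Hyperreal.coe_add

/-- A semialgebraic subset of matrix space: a finite union of sets defined by finitely
many polynomial equations and finitely many strict polynomial inequalities. -/
def IsSemialgebraic (n : ℕ) (S : Set (Mat n ℝ)) : Prop :=
  ∃ (k : ℕ) (P Q : Fin k → Finset (MvPolynomial (Fin n × Fin n) ℝ)),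
    S = ⋃ t : Fin k, {A | (∀ p ∈ P t, MvPolynomial.eval (matEval A) p = 0) ∧
      ∀ q ∈ Q t, 0 < MvPolynomial.eval (matEval A) q}

/-!
The rational hull `H₀` of `H` exists because rational subgroups are closed under intersection, and
`H₀Γ` is closed because `Γ ∩ H₀` is cocompact in `H₀`. Replacing `F` by `F(0)⁻¹F`, which takes
values in `H₀` but in no smaller rational subgroup, it remains to prove that `F(ℝ^d)Γ` is dense in
`H₀Γ`. There are only countably many rational subgroups, so by Baire's theorem we may restrict `F`
to a generic line through `0`, and assume that `F` is a polynomial curve in `G = H₀`.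

Let `P` be a proper rational normal subgroup of `G`. By a Newton polygon argument, the quotients
`F(σ t)F(t)⁻¹` have nontrivial limits modulo `P` for suitable `σ t → ∞`, and left multiplication by
these limits preserves the limit set of the orbit `F(t)PΓ`. Let `M` be the rational hull of `P` and
the conjugates of these limits. By induction the orbit of `F` modulo `M` accumulates everywhere.
Along a generic fibre `gM` the limits act minimally on `M/P(Γ ∩ M)`: otherwise, in a central step of
a rational series between `P` and `M`, a minimal closed invariant set is a section of a circle
bundle. The fibre coordinate that it defines lifts to a character of `M`, whose kernel is a proper
rational subgroup containing the acting set, contrary to the choice of `g`.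
-/

/-! ### The group of unitriangular matrices -/

section Superdiag

variable {n : ℕ} {R : Type} [CommRing R]

/-- The matrices all of whose nonzero entries lie on or above the `k`-th superdiagonal: for `k = 0`
the upper triangular matrices, for `k = 1` the strictly upper triangular ones. They filter the
nilpotent Lie algebra of `UT(n,R)`. -/
def superdiag (R : Type) [CommRing R] (n k : ℕ) : Submodule R (Mat n R) where
  carrier := {X | ∀ i j : Fin n, (j : ℕ) < (i : ℕ) + k → X i j = 0}
  add_mem' ha hb i j h := by simp [ha i j h, hb i j h]
  zero_mem' _ _ _ := rfl
  smul_mem' c _ ha i j h := by simp [ha i j h]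

namespace superdiag

theorem antitone : Antitone (superdiag R n) :=
  fun _ _ h _ hX i j hij => hX i j (by omega)

theorem mul_mem {k l : ℕ} {X Y : Mat n R} (hX : X ∈ superdiag R n k) (hY : Y ∈ superdiag R n l) :
    X * Y ∈ superdiag R n (k + l) := by
  intro i j hij
  rw [Matrix.mul_apply]
  refine Finset.sum_eq_zero fun m _ => ?_
  by_cases h : (m : ℕ) < i + k
  · rw [hX i m h, zero_mul]
  · rw [hY m j (by omega), mul_zero]

theorem one_mem : (1 : Mat n R) ∈ superdiag R n 0 :=
  fun _ _ hij => Matrix.one_apply_ne (by rintro rfl; omega)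

theorem pow_mem {X : Mat n R} (hX : X ∈ superdiag R n 1) (k : ℕ) : X ^ k ∈ superdiag R n k := by
  induction k with
  | zero => simpa using one_mem
  | succ k ih => exact pow_succ X k ▸ mul_mem ih hX

theorem add_pow_sub_pow_mem {X D : Mat n R} {k : ℕ} (hX : X ∈ superdiag R n 1)
    (hD : D ∈ superdiag R n k) (hk : 1 ≤ k) (j : ℕ) :
    (X + D) ^ (j + 1) - X ^ (j + 1) ∈ superdiag R n (k + j) := by
  induction j with
  | zero => simpa using hD
  | succ j ih =>
    have hsplit : (X + D) ^ (j + 1 + 1) - X ^ (j + 1 + 1) =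
        ((X + D) ^ (j + 1) - X ^ (j + 1)) * (X + D) + X ^ (j + 1) * D := by
      rw [pow_succ (X + D) (j + 1), pow_succ X (j + 1)]; noncomm_ring
    rw [hsplit]
    exact add_mem
      (antitone (by omega) (mul_mem ih (add_mem hX (antitone hk hD))))
      (antitone (by omega) (mul_mem (pow_mem hX (j + 1)) hD))

theorem eq_zero {X : Mat n R} {k : ℕ} (hX : X ∈ superdiag R n k) (hk : n ≤ k) : X = 0 :=
  Matrix.ext fun i j => hX i j (by omega)

theorem pow_eq_zero {X : Mat n R} (hX : X ∈ superdiag R n 1) {k : ℕ} (hk : n ≤ k) : X ^ k = 0 :=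
  eq_zero (pow_mem hX k) hk

theorem isNilpotent {X : Mat n R} (hX : X ∈ superdiag R n 1) : IsNilpotent X :=
  ⟨n, pow_eq_zero hX le_rfl⟩

theorem inv_mem {A : Mat n R} (hA : A ∈ superdiag R n 0) (hdet : IsUnit A.det) :
    A⁻¹ ∈ superdiag R n 0 := by
  have := A.invertibleOfIsUnitDet hdet
  have hblock : A.BlockTriangular id := fun i j hij => hA i j hij
  exact fun i j hij => Matrix.blockTriangular_inv_of_blockTriangular hblock hij

end superdiag

end Superdiag

theorem mem_UTset_iff {n : ℕ} {A : Mat n ℝ} : A ∈ UTset n ↔ A - 1 ∈ superdiag ℝ n 1 := by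
  refine ⟨fun ⟨hdiag, hlow⟩ i j hij => ?_, fun h => ⟨fun i => ?_, fun i j hij => ?_⟩⟩
  · rcases eq_or_ne i j with rfl | hne
    · simp [hdiag]
    · simp [hlow i j (by omega), Matrix.one_apply_ne hne]
  · simpa [sub_eq_zero] using h i i (by omega)
  · simpa [Matrix.one_apply_ne (show i ≠ j by rintro rfl; omega)] using h i j (by omega)

theorem UTset.mem_superdiag {n : ℕ} {A : Mat n ℝ} (hA : A ∈ UTset n) : A ∈ superdiag ℝ n 0 :=
  fun i j hij => hA.2 i j hij

theorem UTset.det_eq_one {n : ℕ} {A : Mat n ℝ} (hA : A ∈ UTset n) : A.det = 1 := by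
  rw [Matrix.det_of_isUpperTriangular fun i j hij => hA.2 i j hij]
  exact Finset.prod_eq_one fun i _ => hA.1 i

/-- The group `UT(n,ℝ)`, as a subgroup of `SL(n,ℝ)` from which it inherits its group structure
and its topology. -/
def unitriangular (n : ℕ) : Subgroup (Matrix.SpecialLinearGroup (Fin n) ℝ) where
  carrier := {A | (A : Mat n ℝ) ∈ UTset n}
  one_mem' := mem_UTset_iff.2 (by simp)
  mul_mem' {A B} hA hB := by
    have hAB : (A * B : Mat n ℝ) - 1 = A * ((B : Mat n ℝ) - 1) + ((A : Mat n ℝ) - 1) := by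
      noncomm_ring
    refine mem_UTset_iff.2 (?_ : (A * B : Mat n ℝ) - 1 ∈ _)
    rw [hAB]
    exact add_mem (superdiag.mul_mem (UTset.mem_superdiag hA) (mem_UTset_iff.1 hB))
      (mem_UTset_iff.1 hA)
  inv_mem' {A} hA := by
    have hunit : IsUnit (A : Mat n ℝ).det := by simp
    have hinv : ((A⁻¹ : Matrix.SpecialLinearGroup (Fin n) ℝ) : Mat n ℝ) = (A : Mat n ℝ)⁻¹ :=
      (Matrix.inv_eq_left_inv (by rw [← Matrix.SpecialLinearGroup.coe_mul, inv_mul_cancel,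
        Matrix.SpecialLinearGroup.coe_one])).symm
    have hsub : (A : Mat n ℝ)⁻¹ - 1 = -((A : Mat n ℝ)⁻¹ * ((A : Mat n ℝ) - 1)) := by
      rw [mul_sub, mul_one, Matrix.nonsing_inv_mul _ hunit, neg_sub]
    refine mem_UTset_iff.2 ?_
    rw [hinv, hsub]
    exact neg_mem (superdiag.mul_mem (superdiag.inv_mem (UTset.mem_superdiag hA) hunit)
      (mem_UTset_iff.1 hA))

/-- The group `UT(n,ℝ)` as a type. -/
abbrev UT (n : ℕ) : Type := unitriangular n

namespace UT

variable {n : ℕ}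

/-- The inclusion of `UT(n,ℝ)` into the matrices. -/
def toMatrix : UT n →* Mat n ℝ where
  toFun g := g.1
  map_one' := rfl
  map_mul' _ _ := rfl

theorem toMatrix_injective : Function.Injective (toMatrix : UT n → Mat n ℝ) :=
  Subtype.val_injective.comp Subtype.val_injective

theorem toMatrix_mem (g : UT n) : toMatrix g ∈ UTset n := g.2

theorem toMatrix_sub_one_mem (g : UT n) : toMatrix g - 1 ∈ superdiag ℝ n 1 :=
  mem_UTset_iff.1 (toMatrix_mem g)

/-- A unitriangular matrix as an element of the group `UT(n,ℝ)`. -/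
def ofMatrix (A : Mat n ℝ) (hA : A ∈ UTset n) : UT n := ⟨⟨A, UTset.det_eq_one hA⟩, hA⟩

theorem toMatrix_inv (g : UT n) : toMatrix g⁻¹ = (toMatrix g)⁻¹ :=
  (Matrix.inv_eq_left_inv (by rw [← map_mul, inv_mul_cancel, map_one])).symm

theorem isClosed_UTset : IsClosed (UTset n) := by
  simp only [UTset, Set.ofPred_and, Set.ofPred_forall]
  refine IsClosed.inter (isClosed_iInter fun i => ?_)
    (isClosed_iInter fun i => isClosed_iInter fun j => isClosed_iInter fun _ => ?_)
  all_goals exact isClosed_eq (continuous_id.matrix_elem _ _) continuous_const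

theorem isClosedEmbedding_toMatrix : Topology.IsClosedEmbedding (toMatrix : UT n → Mat n ℝ) :=
  Matrix.SpecialLinearGroup.isClosedEmbedding_val.comp
    (IsClosed.isClosedEmbedding_subtypeVal
      (isClosed_UTset.preimage Matrix.SpecialLinearGroup.isClosedEmbedding_val.continuous))

@[fun_prop] theorem continuous_toMatrix : Continuous (toMatrix : UT n → Mat n ℝ) :=
  isClosedEmbedding_toMatrix.continuous

theorem continuous_iff {X : Type*} [TopologicalSpace X] {f : X → UT n} :
    Continuous f ↔ Continuous fun x => toMatrix (f x) :=
  isClosedEmbedding_toMatrix.isInducing.continuous_iff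

instance : T2Space (UT n) := isClosedEmbedding_toMatrix.isEmbedding.t2Space

instance : SecondCountableTopology (UT n) :=
  haveI : SecondCountableTopology (Mat n ℝ) :=
    inferInstanceAs (SecondCountableTopology (Fin n → Fin n → ℝ))
  isClosedEmbedding_toMatrix.isEmbedding.secondCountableTopology

instance : LocallyCompactSpace (UT n) :=
  haveI : LocallyCompactSpace (Mat n ℝ) :=
    inferInstanceAs (LocallyCompactSpace (Fin n → Fin n → ℝ))
  isClosedEmbedding_toMatrix.locallyCompactSpace

end UT

/-! ### Exponential, logarithm and real powers -/

/-- The Lie algebra of `UT(n,ℝ)`: the strictly upper triangular matrices. -/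
abbrev StrictUpper (n : ℕ) : Type := superdiag ℝ n 1

namespace UT

variable {n : ℕ}

theorem exp_sub_one_eq_sum {X : Mat n ℝ} (hX : X ∈ superdiag ℝ n 1) :
    IsNilpotent.exp X - 1 =
      ∑ j ∈ Finset.range (n + 1), ((j + 1).factorial : ℝ)⁻¹ • X ^ (j + 1) := by
  rw [IsNilpotent.exp_eq_sum (superdiag.pow_eq_zero hX (show n ≤ n + 2 by omega)),
    Finset.sum_range_succ']
  simp only [Nat.factorial_zero, Nat.cast_one, inv_one, pow_zero, one_smul, add_sub_cancel_right]
  refine Finset.sum_congr rfl fun j _ => Matrix.ext fun a b => ?_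
  simp [Rat.smul_def]

/-- The exponential map `𝔲 → UT(n,ℝ)`, a polynomial map since `𝔲` consists of nilpotent
matrices. -/
def exp (X : StrictUpper n) : UT n :=
  ofMatrix (IsNilpotent.exp X.1) <| mem_UTset_iff.2 <| exp_sub_one_eq_sum X.2 ▸
    sum_mem fun j _ => Submodule.smul_mem _ _
      (superdiag.antitone (Nat.le_add_left 1 j) (superdiag.pow_mem X.2 _))

theorem toMatrix_exp (X : StrictUpper n) :
    toMatrix (exp X) =
      1 + ∑ j ∈ Finset.range (n + 1), ((j + 1).factorial : ℝ)⁻¹ • (X : Mat n ℝ) ^ (j + 1) :=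
  sub_eq_iff_eq_add'.1 (exp_sub_one_eq_sum X.2)

theorem toMatrix_exp_eq_sum (X : StrictUpper n) :
    toMatrix (exp X) =
      ∑ j ∈ Finset.range (n + 2), (j.factorial : ℝ)⁻¹ • (X : Mat n ℝ) ^ j := by
  rw [toMatrix_exp, Finset.sum_range_succ' _ (n + 1), add_comm]
  simp

theorem exp_add {X Y : StrictUpper n} (h : Commute (X : Mat n ℝ) Y) :
    exp (X + Y) = exp X * exp Y :=
  toMatrix_injective <|
    IsNilpotent.exp_add_of_commute h (superdiag.isNilpotent X.2) (superdiag.isNilpotent Y.2)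

@[simp] theorem exp_zero : exp (0 : StrictUpper n) = 1 :=
  toMatrix_injective IsNilpotent.exp_zero

theorem exp_add_smul (s t : ℝ) (X : StrictUpper n) :
    exp ((s + t) • X) = exp (s • X) * exp (t • X) := by
  rw [add_smul]
  exact exp_add (((Commute.refl X.1).smul_left s).smul_right t)

theorem exp_natCast_smul (k : ℕ) (X : StrictUpper n) : exp ((k : ℝ) • X) = exp X ^ k := by
  induction k with
  | zero => simp
  | succ k ih => rw [Nat.cast_succ, exp_add_smul, ih, one_smul, pow_succ]

theorem exp_neg (X : StrictUpper n) : exp (-X) = (exp X)⁻¹ :=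
  eq_inv_of_mul_eq_one_left <| by
    rw [← exp_add (by simp), neg_add_cancel, exp_zero]

/-- The binomial coefficient `m choose j` as a polynomial in `m`. -/
def binomPoly (j : ℕ) : Polynomial ℝ :=
  Polynomial.C (j.factorial : ℝ)⁻¹ * descPochhammer ℝ j

theorem binomPoly_eval_natCast (j m : ℕ) : (binomPoly j).eval (m : ℝ) = m.choose j := by
  rw [binomPoly, Polynomial.eval_mul, Polynomial.eval_C, descPochhammer_eval_eq_descFactorial,
    Nat.descFactorial_eq_factorial_mul_choose, Nat.cast_mul,
    inv_mul_cancel_left₀ (by positivity)]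

/-- The coefficients of the logarithm series. Since `A ^ m = ∑ j, (m choose j) • (A - 1) ^ j`,
and `log A` is the derivative of `A ^ m` at `m = 0`, they are the linear coefficients of the
polynomials `m choose j`. -/
def logCoeff (j : ℕ) : ℝ := (binomPoly j).coeff 1

theorem logCoeff_zero : logCoeff 0 = 0 := by simp [logCoeff, binomPoly, Polynomial.coeff_one]

theorem logCoeff_one : logCoeff 1 = 1 := by simp [logCoeff, binomPoly]

/-- The logarithm `UT(n,ℝ) → 𝔲`. -/
def log (g : UT n) : StrictUpper n :=
  ⟨∑ j ∈ Finset.range (n + 1), logCoeff (j + 1) • (toMatrix g - 1) ^ (j + 1),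
    sum_mem fun j _ => Submodule.smul_mem _ _ (superdiag.antitone (Nat.le_add_left 1 j)
      (superdiag.pow_mem (toMatrix_sub_one_mem g) _))⟩

theorem coe_log (g : UT n) :
    (log g : Mat n ℝ) =
      ∑ j ∈ Finset.range (n + 1), logCoeff (j + 1) • (toMatrix g - 1) ^ (j + 1) := rfl

theorem toMatrix_pow_eq_sum (g : UT n) (m : ℕ) :
    toMatrix g ^ m =
      ∑ j ∈ Finset.range (n + 2), (m.choose j : ℝ) • (toMatrix g - 1) ^ j := by
  set N := toMatrix g - 1
  have hterm : ∀ j, N ^ j * 1 ^ (m - j) * (m.choose j : Mat n ℝ) = (m.choose j : ℝ) • N ^ j :=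
    fun j => by rw [one_pow, mul_one, ← nsmul_eq_mul', Nat.cast_smul_eq_nsmul]
  rw [show toMatrix g = N + 1 by simp [N], (Commute.one_right N).add_pow]
  simp only [hterm]
  refine Finset.sum_congr_of_eq_on_inter (fun j _ hj => ?_) (fun j _ hj => ?_) fun _ _ _ => rfl
  · rw [superdiag.pow_eq_zero (toMatrix_sub_one_mem g) (by simp at hj; omega), smul_zero]
  · rw [Nat.choose_eq_zero_of_lt (by simpa using hj), Nat.cast_zero, zero_smul]

theorem log_exp (X : StrictUpper n) : log (exp X) = X := by
  refine Subtype.ext (Matrix.ext fun a b => ?_)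
  set N : Mat n ℝ := toMatrix (exp X) - 1
  have hpoly : ∑ j ∈ Finset.range (n + 2), Polynomial.C ((N ^ j) a b) * binomPoly j =
      ∑ j ∈ Finset.range (n + 2),
        Polynomial.C ((j.factorial : ℝ)⁻¹ * ((X : Mat n ℝ) ^ j) a b) * Polynomial.X ^ j := by
    refine Polynomial.eq_of_infinite_eval_eq _ _
      ((Set.infinite_range_of_injective (Nat.cast_injective (R := ℝ))).mono ?_)
    rintro _ ⟨m, rfl⟩
    have hpow := (toMatrix_exp_eq_sum ((m : ℝ) • X)).symm
    rw [exp_natCast_smul, map_pow, toMatrix_pow_eq_sum] at hpow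
    have hentry := congrFun (congrFun hpow a) b
    simp only [Matrix.sum_apply, Matrix.smul_apply, smul_eq_mul,
      Submodule.coe_smul, smul_pow] at hentry
    simp only [Set.mem_ofPred_eq, Polynomial.eval_finsetSum, Polynomial.eval_mul,
      Polynomial.eval_C, binomPoly_eval_natCast, Polynomial.eval_pow, Polynomial.eval_X]
    rw [Finset.sum_congr rfl fun j _ => mul_comm _ _, ← hentry]
    exact Finset.sum_congr rfl fun j _ => by ring
  have hcoeff := congrArg (fun p => Polynomial.coeff p 1) hpoly
  simp only [Polynomial.finsetSum_coeff, Polynomial.coeff_C_mul, Polynomial.coeff_X_pow] at hcoeff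
  rw [Finset.sum_range_succ', ← logCoeff, logCoeff_zero, mul_zero, add_zero] at hcoeff
  simp only [coe_log, Matrix.sum_apply, Matrix.smul_apply, smul_eq_mul]
  rw [Finset.sum_congr rfl fun j _ => mul_comm _ _]
  refine hcoeff.trans ((Finset.sum_eq_single_of_mem 1 (by simp) fun j _ hj => ?_).trans ?_)
  · simp [hj.symm]
  · simp

theorem exists_sub_exp_mem_superdiag (g : UT n) (k : ℕ) :
    ∃ X : StrictUpper n, toMatrix g - toMatrix (exp X) ∈ superdiag ℝ n (k + 1) := by
  induction k with
  | zero => exact ⟨0, by simpa using toMatrix_sub_one_mem g⟩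
  | succ k ih =>
    obtain ⟨X, hX⟩ := ih
    set D := toMatrix g - toMatrix (exp X) with hD
    refine ⟨X + ⟨D, superdiag.antitone (by omega) hX⟩, ?_⟩
    have herror : toMatrix g - toMatrix (exp (X + ⟨D, superdiag.antitone (by omega) hX⟩)) =
        -∑ j ∈ Finset.range n, ((j + 2).factorial : ℝ)⁻¹ •
          (((X : Mat n ℝ) + D) ^ (j + 2) - (X : Mat n ℝ) ^ (j + 2)) := by
      rw [eq_add_of_sub_eq hD.symm, toMatrix_exp, toMatrix_exp, Finset.sum_range_succ',
        Finset.sum_range_succ']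
      simp only [zero_add, Nat.factorial_one, Nat.cast_one, inv_one, one_smul, pow_one, smul_sub,
        Finset.sum_sub_distrib, Submodule.coe_add]
      abel
    rw [herror]
    refine neg_mem (sum_mem fun j _ => Submodule.smul_mem _ _ ?_)
    exact superdiag.antitone (by omega)
      (superdiag.add_pow_sub_pow_mem X.2 hX (by omega) (j + 1))

theorem exp_log (g : UT n) : exp (log g) = g := by
  obtain ⟨X, hX⟩ := exists_sub_exp_mem_superdiag g n
  have hgX : exp X = g :=
    (toMatrix_injective (sub_eq_zero.1 (superdiag.eq_zero hX (by omega)))).symm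
  rw [← hgX, log_exp]

@[simp] theorem log_one : log (1 : UT n) = 0 := by rw [← exp_zero, log_exp]

@[fun_prop] theorem continuous_exp : Continuous (exp : StrictUpper n → UT n) := by
  simp only [continuous_iff, toMatrix_exp]
  fun_prop

@[fun_prop] theorem continuous_log : Continuous (log : UT n → StrictUpper n) := by
  refine Continuous.subtype_mk ?_ _
  fun_prop

/-- Real powers `g ^ t = exp (t log g)`. -/
instance : Pow (UT n) ℝ := ⟨fun g t => exp (t • log g)⟩

theorem rpow_def (g : UT n) (t : ℝ) : g ^ t = exp (t • log g) := rfl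

theorem log_rpow (g : UT n) (t : ℝ) : log (g ^ t) = t • log g := log_exp _

theorem exp_rpow (X : StrictUpper n) (t : ℝ) : exp X ^ t = exp (t • X) := by
  rw [rpow_def, log_exp]

theorem rpow_add (g : UT n) (s t : ℝ) : g ^ (s + t) = g ^ s * g ^ t := exp_add_smul _ _ _

@[simp] theorem rpow_zero (g : UT n) : g ^ (0 : ℝ) = 1 := by simp [rpow_def]

@[simp] theorem rpow_one (g : UT n) : g ^ (1 : ℝ) = g := by simp [rpow_def, exp_log]

@[simp] theorem one_rpow (t : ℝ) : (1 : UT n) ^ t = 1 := by simp [rpow_def]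

theorem rpow_natCast (g : UT n) (k : ℕ) : g ^ (k : ℝ) = g ^ k := by
  rw [rpow_def, exp_natCast_smul, exp_log]

theorem rpow_neg (g : UT n) (t : ℝ) : g ^ (-t) = (g ^ t)⁻¹ := by
  rw [rpow_def, rpow_def, ← exp_neg]
  exact congrArg exp (neg_smul t (log g))

theorem rpow_intCast (g : UT n) (k : ℤ) : g ^ (k : ℝ) = g ^ k := by
  cases k with
  | ofNat k => simpa using rpow_natCast g k
  | negSucc k =>
    rw [zpow_negSucc, ← rpow_natCast, ← rpow_neg]
    push_cast [Int.negSucc_eq]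
    rfl

theorem rpow_mul (g : UT n) (s t : ℝ) : g ^ (s * t) = (g ^ s) ^ t := by
  rw [rpow_def, rpow_def, log_rpow, smul_smul, mul_comm]

theorem log_inv (g : UT n) : log g⁻¹ = -log g := by
  rw [← rpow_one g, ← rpow_neg, log_rpow, log_rpow]
  exact neg_smul (1 : ℝ) (log g)

theorem inv_rpow (g : UT n) (t : ℝ) : g⁻¹ ^ t = (g ^ t)⁻¹ := by
  rw [← rpow_one g, ← rpow_neg, ← rpow_mul, rpow_one, neg_one_mul, rpow_neg]

theorem continuous_rpow : Continuous fun p : UT n × ℝ => p.1 ^ p.2 := by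
  simp only [rpow_def]
  fun_prop

theorem continuous_rpow_const (g : UT n) : Continuous fun t : ℝ => g ^ t :=
  continuous_rpow.comp (Continuous.prodMk_right g)

/-- The matrix `(exp (s X) - 1) / s`, continued polynomially to `s = 0`. -/
def expSlope (X : Mat n ℝ) (s : ℝ) : Mat n ℝ :=
  ∑ j ∈ Finset.range (n + 1), (((j + 1).factorial : ℝ)⁻¹ * s ^ j) • X ^ (j + 1)

theorem toMatrix_exp_smul (s : ℝ) (X : StrictUpper n) :
    toMatrix (exp (s • X)) = 1 + s • expSlope X.1 s := by
  rw [toMatrix_exp, expSlope, Finset.smul_sum]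
  congr! 2 with j
  rw [Submodule.coe_smul, smul_pow, smul_smul, smul_smul]
  ring_nf

theorem expSlope_zero (X : Mat n ℝ) : expSlope X 0 = X := by
  rw [expSlope, Finset.sum_range_succ']
  simp

@[fun_prop] theorem continuous_expSlope (X : Mat n ℝ) : Continuous (expSlope X) := by
  unfold expSlope
  fun_prop

theorem exists_log_exp_mul_exp_eq_smul (X Y : StrictUpper n) :
    ∃ f : ℝ → Mat n ℝ, Continuous f ∧ f 0 = X + Y ∧
      ∀ s, (log (exp (s • X) * exp (s • Y)) : Mat n ℝ) = s • f s := by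
  let Q : ℝ → Mat n ℝ := fun s =>
    expSlope X.1 s + expSlope Y.1 s + s • (expSlope X.1 s * expSlope Y.1 s)
  have hQ : ∀ s, toMatrix (exp (s • X) * exp (s • Y)) - 1 = s • Q s := fun s => by
    simp only [map_mul, toMatrix_exp_smul, Q, mul_add, add_mul, smul_add, mul_one, one_mul,
      smul_mul_assoc, mul_smul_comm]
    abel
  refine ⟨fun s => ∑ j ∈ Finset.range (n + 1), (logCoeff (j + 1) * s ^ j) • Q s ^ (j + 1),
    by fun_prop, ?_, fun s => ?_⟩
  · simp [Finset.sum_range_succ', logCoeff_one, Q, expSlope_zero]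
  · rw [coe_log, hQ, Finset.smul_sum]
    congr! 1 with j
    rw [smul_pow, smul_smul, smul_smul]
    ring_nf

/-- The **Lie–Trotter product formula**. -/
theorem tendsto_exp_mul_exp_pow (X Y : StrictUpper n) :
    Tendsto (fun k : ℕ => (exp ((k + 1 : ℝ)⁻¹ • X) * exp ((k + 1 : ℝ)⁻¹ • Y)) ^ (k + 1)) atTop
      (nhds (exp (X + Y))) := by
  obtain ⟨f, hf, hf0, hlog⟩ := exists_log_exp_mul_exp_eq_smul X Y
  have hinv : Tendsto (fun k : ℕ => (k + 1 : ℝ)⁻¹) atTop (nhds 0) := by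
    simpa using tendsto_one_div_add_atTop_nhds_zero_nat (𝕜 := ℝ)
  have hlim : Tendsto (fun k : ℕ => (k + 1 : ℝ) •
      log (exp ((k + 1 : ℝ)⁻¹ • X) * exp ((k + 1 : ℝ)⁻¹ • Y))) atTop (nhds (X + Y)) := by
    rw [tendsto_subtype_rng, Submodule.coe_add, ← hf0]
    refine ((hf.tendsto 0).comp hinv).congr fun k => ?_
    rw [Submodule.coe_smul, hlog, smul_smul, mul_inv_cancel₀ (by positivity), one_smul]
    rfl
  refine ((continuous_exp.tendsto _).comp hlim).congr fun k => ?_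
  have hpow := exp_natCast_smul (k + 1)
    (log (exp ((k + 1 : ℝ)⁻¹ • X) * exp ((k + 1 : ℝ)⁻¹ • Y)))
  rw [exp_log, Nat.cast_succ] at hpow
  exact hpow

end UT

/-! ### Polynomial maps -/

section PolyFun

variable {ι T : Type*}

/-- The algebra of polynomial functions on `T` in the coordinate functions `c`. -/
def polyFun (c : ι → T → ℝ) : Subalgebra ℝ (T → ℝ) := Algebra.adjoin ℝ (Set.range c)

theorem coord_mem_polyFun (c : ι → T → ℝ) (i : ι) : c i ∈ polyFun c :=
  Algebra.subset_adjoin ⟨i, rfl⟩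

theorem mem_polyFun_iff {c : ι → T → ℝ} {f : T → ℝ} :
    f ∈ polyFun c ↔ ∃ p : MvPolynomial ι ℝ, ∀ t, f t = MvPolynomial.eval (fun i => c i t) p := by
  rw [polyFun, Algebra.adjoin_range_eq_range_aeval, AlgHom.mem_range]
  refine exists_congr fun p => funext_iff.trans (forall_congr' fun t => ?_)
  have heval : MvPolynomial.aeval c p t = MvPolynomial.eval (fun i => c i t) p := by
    induction p using MvPolynomial.induction_on with
    | C a => simp
    | add p q hp hq => simp [hp, hq]
    | mul_X p i hp => simp [hp]
  rw [heval, eq_comm]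

theorem comp_mem_of_mem_polyFun {c : ι → T → ℝ} {f : T → ℝ} (hf : f ∈ polyFun c) {S : Type*}
    {A : Subalgebra ℝ (S → ℝ)} {φ : S → T} (hφ : ∀ i, c i ∘ φ ∈ A) : f ∘ φ ∈ A := by
  induction hf using Algebra.adjoin_induction with
  | mem f hf => obtain ⟨i, rfl⟩ := hf; exact hφ i
  | algebraMap r => exact A.algebraMap_mem r
  | add f g _ _ hf hg => exact A.add_mem hf hg
  | mul f g _ _ hf hg => exact A.mul_mem hf hg

theorem continuous_of_mem_polyFun [TopologicalSpace T] {c : ι → T → ℝ} {f : T → ℝ}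
    (hf : f ∈ polyFun c) (hc : ∀ i, Continuous (c i)) : Continuous f := by
  induction hf using Algebra.adjoin_induction with
  | mem f hf => obtain ⟨i, rfl⟩ := hf; exact hc i
  | algebraMap r => exact continuous_const
  | add f g _ _ hf hg => exact hf.add hg
  | mul f g _ _ hf hg => exact hf.mul hg

/-- The algebra of polynomial functions on the real line. -/
abbrev linePoly : Subalgebra ℝ (ℝ → ℝ) := polyFun fun (_ : Unit) (t : ℝ) => t

theorem id_mem_linePoly : (fun t : ℝ => t) ∈ linePoly := coord_mem_polyFun _ ()

theorem mem_linePoly_iff {f : ℝ → ℝ} :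
    f ∈ linePoly ↔ ∃ p : Polynomial ℝ, ∀ t, f t = p.eval t := by
  rw [linePoly, polyFun, Set.range_const, Algebra.adjoin_singleton_eq_range_aeval,
    AlgHom.mem_range]
  refine exists_congr fun p => funext_iff.trans (forall_congr' fun t => ?_)
  rw [Polynomial.aeval_fn_apply, Polynomial.coe_aeval_eq_eval, eq_comm]

theorem eq_zero_of_mem_linePoly {f : ℝ → ℝ} (hf : f ∈ linePoly) {S : Set ℝ} (hS : S.Infinite)
    (h : ∀ t ∈ S, f t = 0) (t : ℝ) : f t = 0 := by
  obtain ⟨p, hp⟩ := mem_linePoly_iff.1 hf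
  have hp0 : p = 0 := Polynomial.eq_zero_of_infinite_isRoot p (hS.mono fun s hs => by
    simpa [hp] using h s hs)
  rw [hp, hp0, Polynomial.eval_zero]

theorem eq_const_of_mem_linePoly_of_bounded {f : ℝ → ℝ} (hf : f ∈ linePoly) {C : ℝ}
    (h : ∀ t, |f t| ≤ C) (t : ℝ) : f t = f 0 := by
  obtain ⟨p, hp⟩ := mem_linePoly_iff.1 hf
  have hdeg : p.degree ≤ 0 := by
    by_contra hdeg
    obtain ⟨x, hx⟩ :=
      ((Polynomial.abs_tendsto_atTop p (not_le.1 hdeg)).eventually_gt_atTop C).exists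
    exact absurd (h x) (by rw [hp]; exact not_le.2 hx)
  rw [Polynomial.eq_C_of_degree_le_zero hdeg] at hp
  simp [hp]

/-- The algebra of polynomial functions on `ℝ ^ d`. -/
abbrev affinePoly (d : ℕ) : Subalgebra ℝ ((Fin d → ℝ) → ℝ) :=
  polyFun fun (i : Fin d) (x : Fin d → ℝ) => x i

end PolyFun

namespace UT

variable {n : ℕ} {T : Type*}

/-- The matrix valued functions on `T` with entries in the algebra `A` of functions on `T`. -/
def entriesIn (A : Subalgebra ℝ (T → ℝ)) (n : ℕ) : Subalgebra ℝ (T → Mat n ℝ) where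
  carrier := {M | ∀ i j, (fun t => M t i j) ∈ A}
  mul_mem' {M N} hM hN i j := by
    have hentry : (fun t => (M * N) t i j) = ∑ k, (fun t => M t i k) * fun t => N t k j := by
      ext t
      simp [Matrix.mul_apply]
    exact hentry ▸ A.sum_mem fun k _ => A.mul_mem (hM i k) (hN k j)
  add_mem' hM hN i j := A.add_mem (hM i j) (hN i j)
  algebraMap_mem' r i j := A.algebraMap_mem (algebraMap ℝ (Mat n ℝ) r i j)

theorem smul_mem_entriesIn {A : Subalgebra ℝ (T → ℝ)} {τ : T → ℝ} (hτ : τ ∈ A)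
    {M : T → Mat n ℝ} (hM : M ∈ entriesIn A n) : (fun t => τ t • M t) ∈ entriesIn A n :=
  fun i j => A.mul_mem hτ (hM i j)

/-- A map to `UT(n,ℝ)` is polynomial if its matrix entries belong to the algebra `A` of functions
regarded as polynomial on the source. -/
def IsPolyMap (A : Subalgebra ℝ (T → ℝ)) (φ : T → UT n) : Prop :=
  (fun t => toMatrix (φ t)) ∈ entriesIn A n

namespace IsPolyMap

variable {A : Subalgebra ℝ (T → ℝ)} {φ ψ : T → UT n}

theorem const (g : UT n) : IsPolyMap A fun _ : T => g :=
  fun i j => A.algebraMap_mem (toMatrix g i j)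

theorem mul (hφ : IsPolyMap A φ) (hψ : IsPolyMap A ψ) : IsPolyMap A fun t => φ t * ψ t := by
  simp only [IsPolyMap, map_mul]
  exact (entriesIn A n).mul_mem hφ hψ

theorem coe_log_mem (hφ : IsPolyMap A φ) : (fun t => (log (φ t) : Mat n ℝ)) ∈ entriesIn A n := by
  have hsum : (fun t => (log (φ t) : Mat n ℝ)) =
      ∑ j ∈ Finset.range (n + 1), logCoeff (j + 1) • ((fun t => toMatrix (φ t)) - 1) ^ (j + 1) := by
    ext1 t
    simp [coe_log]
  exact hsum ▸ sum_mem fun j _ =>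
    Subalgebra.smul_mem _ (pow_mem (sub_mem hφ (one_mem _)) _) _

theorem exp {X : T → StrictUpper n} (hX : (fun t => (X t : Mat n ℝ)) ∈ entriesIn A n) :
    IsPolyMap A fun t => exp (X t) := by
  have hsum : (fun t => toMatrix (UT.exp (X t))) =
      ∑ j ∈ Finset.range (n + 2), (j.factorial : ℝ)⁻¹ • (fun t => (X t : Mat n ℝ)) ^ j := by
    ext1 t
    simp [toMatrix_exp_eq_sum]
  rw [IsPolyMap, hsum]
  exact sum_mem fun j _ => Subalgebra.smul_mem _ (pow_mem hX _) _

theorem rpow {τ : T → ℝ} (hφ : IsPolyMap A φ) (hτ : τ ∈ A) : IsPolyMap A fun t => φ t ^ τ t :=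
  exp (smul_mem_entriesIn hτ hφ.coe_log_mem)

theorem inv (hφ : IsPolyMap A φ) : IsPolyMap A fun t => (φ t)⁻¹ := by
  have hneg := hφ.rpow (A.algebraMap_mem (-1 : ℝ))
  simpa only [Pi.algebraMap_apply, Algebra.algebraMap_self_apply, rpow_neg, rpow_one] using hneg

theorem comp {ι S : Type*} {c : ι → T → ℝ} (hφ : IsPolyMap (polyFun c) φ)
    {B : Subalgebra ℝ (S → ℝ)} {τ : S → T} (hτ : ∀ i, c i ∘ τ ∈ B) :
    IsPolyMap B fun s => φ (τ s) :=
  fun i j => comp_mem_of_mem_polyFun (hφ i j) hτ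

theorem linear_log_mem (hφ : IsPolyMap A φ) (l : StrictUpper n →ₗ[ℝ] ℝ) :
    (fun t => l (log (φ t))) ∈ A := by
  obtain ⟨l', hl'⟩ := LinearMap.exists_extend l
  have hsum : (fun t => l (log (φ t))) =
      ∑ i, ∑ j, l' (Matrix.single i j 1) • fun t => (log (φ t) : Mat n ℝ) i j := by
    ext t
    have hentries : ∀ X : Mat n ℝ, l' X = ∑ i, ∑ j, l' (Matrix.single i j 1) * X i j := fun X => by
      conv_lhs => rw [Matrix.matrix_eq_sum_single X]
      simp only [map_sum]
      refine Finset.sum_congr rfl fun i _ => Finset.sum_congr rfl fun j _ => ?_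
      rw [mul_comm, ← smul_eq_mul, ← map_smul, Matrix.smul_single, smul_eq_mul, mul_one]
    rw [← hl', LinearMap.comp_apply, Submodule.subtype_apply, hentries]
    simp
  exact hsum ▸ A.sum_mem fun i _ => A.sum_mem fun j _ => A.smul_mem (hφ.coe_log_mem i j) _

end IsPolyMap

/-- The coordinate ring of `UT(n,ℝ)`: the polynomial functions in the matrix entries. -/
abbrev coordRing (n : ℕ) : Subalgebra ℝ (UT n → ℝ) :=
  polyFun fun (ij : Fin n × Fin n) g => toMatrix g ij.1 ij.2

theorem isPolyMap_id : IsPolyMap (coordRing n) fun g => g :=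
  fun i j => coord_mem_polyFun _ (i, j)

theorem IsPolyMap.comp_mem {A : Subalgebra ℝ (T → ℝ)} {φ : T → UT n} {f : UT n → ℝ}
    (hφ : IsPolyMap A φ) (hf : f ∈ coordRing n) : (fun t => f (φ t)) ∈ A :=
  comp_mem_of_mem_polyFun hf fun ij => hφ ij.1 ij.2

theorem continuous_of_mem_coordRing {f : UT n → ℝ} (hf : f ∈ coordRing n) : Continuous f :=
  continuous_of_mem_polyFun hf fun ij => continuous_toMatrix.matrix_elem ij.1 ij.2

theorem isPolyMap_rpow (g : UT n) : IsPolyMap linePoly fun t => g ^ t :=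
  (IsPolyMap.const g).rpow id_mem_linePoly

end UT

/-! ### Borel density -/

section DegreeLT

variable {G R : Type*} [Group G] [CommRing R]

/-- The functions `f : G → R` that are polynomials of degree less than `k` in the sense of Leibman:
those killed by any `k` successive difference operators `f ↦ f (· * g) - f`. -/
def degreeLT (G R : Type*) [Group G] [CommRing R] : ℕ → Submodule R (G → R)
  | 0 => ⊥
  | k + 1 => ⨅ g : G, (degreeLT G R k).comap (LinearMap.funLeft R R (· * g) - LinearMap.id)

namespace degreeLT

theorem mem_zero {f : G → R} : f ∈ degreeLT G R 0 ↔ f = 0 := Submodule.mem_bot R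

theorem mem_succ {k : ℕ} {f : G → R} :
    f ∈ degreeLT G R (k + 1) ↔ ∀ g, (fun x => f (x * g) - f x) ∈ degreeLT G R k := by
  simp only [degreeLT, Submodule.mem_iInf, Submodule.mem_comap]
  rfl

theorem monotone : Monotone (degreeLT G R) := by
  refine monotone_nat_of_le_succ fun k => ?_
  induction k with
  | zero => exact bot_le
  | succ k ih => exact fun f hf => mem_succ.2 fun g => ih (mem_succ.1 hf g)

theorem mul_mem {k l : ℕ} {f h : G → R} (hf : f ∈ degreeLT G R k) (hh : h ∈ degreeLT G R l) :
    f * h ∈ degreeLT G R (k + l) := by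
  induction k generalizing f h l with
  | zero => rw [mem_zero.1 hf, zero_mul]; exact zero_mem _
  | succ k ihk =>
    induction l generalizing h with
    | zero => rw [mem_zero.1 hh, mul_zero]; exact zero_mem _
    | succ l ihl =>
      refine mem_succ.2 fun g => ?_
      have hleibniz : (fun x => (f * h) (x * g) - (f * h) x) =
          (fun x => f (x * g) - f x) * h + f * (fun x => h (x * g) - h x) +
            (fun x => f (x * g) - f x) * fun x => h (x * g) - h x := by
        ext x
        simp only [Pi.add_apply, Pi.mul_apply]
        ring
      rw [hleibniz]
      have hle : k + (l + 1) ≤ k + 1 + l := by omega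
      refine add_mem (add_mem ?_ (ihl (mem_succ.1 hh g))) ?_
      · exact monotone hle (ihk (mem_succ.1 hf g) hh)
      · exact monotone (by omega : k + l ≤ k + 1 + l)
          (ihk (mem_succ.1 hf g) (mem_succ.1 hh g))

end degreeLT

end DegreeLT

namespace UT

variable {n : ℕ}

theorem entry_mem_degreeLT (k : ℕ) (i j : Fin n) (hj : (j : ℕ) < k) :
    (fun g : UT n => toMatrix g i j) ∈ degreeLT (UT n) ℝ k := by
  induction k generalizing i j with
  | zero => omega
  | succ k ih =>
    refine degreeLT.mem_succ.2 fun g => ?_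
    have hdiff : (fun x : UT n => toMatrix (x * g) i j - toMatrix x i j) =
        ∑ l, (toMatrix g - 1) l j • fun x => toMatrix x i l := by
      ext x
      have hsub : toMatrix (x * g) - toMatrix x = toMatrix x * (toMatrix g - 1) := by
        rw [map_mul, mul_sub, mul_one]
      rw [← Matrix.sub_apply, hsub, Matrix.mul_apply]
      simp [mul_comm]
    rw [hdiff]
    refine sum_mem fun l _ => ?_
    by_cases hl : (l : ℕ) < k
    · exact Submodule.smul_mem _ _ (ih i l hl)
    · rw [toMatrix_sub_one_mem g l j (by omega), zero_smul]
      exact zero_mem _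

theorem exists_mem_degreeLT {f : UT n → ℝ} (hf : f ∈ coordRing n) :
    ∃ k, f ∈ degreeLT (UT n) ℝ k := by
  induction hf using Algebra.adjoin_induction with
  | mem f hf => obtain ⟨⟨i, j⟩, rfl⟩ := hf; exact ⟨n, entry_mem_degreeLT n i j j.2⟩
  | algebraMap r => exact ⟨1, degreeLT.mem_succ.2 fun g => degreeLT.mem_zero.2 (by ext; simp)⟩
  | add f g _ _ hf hg =>
    obtain ⟨k, hk⟩ := hf
    obtain ⟨l, hl⟩ := hg
    exact ⟨max k l, add_mem (degreeLT.monotone (le_max_left k l) hk)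
      (degreeLT.monotone (le_max_right k l) hl)⟩
  | mul f g _ _ hf hg =>
    obtain ⟨k, hk⟩ := hf
    obtain ⟨l, hl⟩ := hg
    exact ⟨k + l, degreeLT.mul_mem hk hl⟩

/-- A real algebraic subgroup of `UT(n,ℝ)`, characterised as a closed subgroup that is closed under
real powers. -/
structure IsRealAlgebraic (L : Subgroup (UT n)) : Prop where
  isClosed : IsClosed (L : Set (UT n))
  rpow_mem : ∀ g ∈ L, ∀ t : ℝ, g ^ t ∈ L

/-- A subgroup `L` is `Γ`-rational if `L ∩ Γ` is cocompact in `L`. Discreteness of `Γ` is assumed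
separately. -/
def IsRational (Γ L : Subgroup (UT n)) : Prop :=
  ∃ K : Set (UT n), IsCompact K ∧ (L : Set (UT n)) ⊆ K * (Γ ⊓ L : Subgroup (UT n))

/-- **Borel density**: a lattice is Zariski dense. A polynomial `f` of degree `k` on `M` that
vanishes on the lattice is right invariant under it by induction on `k`, hence bounded on `M`,
hence constant along one-parameter subgroups. -/
theorem IsRational.eq_zero_of_mem_coordRing {Γ M : Subgroup (UT n)} (hΓM : IsRational Γ M)
    (hM : IsRealAlgebraic M) {f : UT n → ℝ} (hf : f ∈ coordRing n) (h0 : ∀ γ ∈ Γ ⊓ M, f γ = 0) :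
    ∀ g ∈ M, f g = 0 := by
  obtain ⟨k, hk⟩ := exists_mem_degreeLT hf
  induction k generalizing f with
  | zero => exact fun g _ => congrFun (degreeLT.mem_zero.1 hk) g
  | succ k ih =>
    have hinv : ∀ γ ∈ Γ ⊓ M, ∀ g ∈ M, f (g * γ) = f g := fun γ hγ g hg => by
      have hdiff : (fun x => f (x * γ) - f x) ∈ coordRing n :=
        sub_mem ((isPolyMap_id.mul (.const γ)).comp_mem hf) hf
      exact sub_eq_zero.1 (ih hdiff
        (fun δ hδ => by rw [h0 δ hδ, h0 _ (mul_mem hδ hγ), sub_zero])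
        (degreeLT.mem_succ.1 hk γ) g hg)
    obtain ⟨K, hK, hKM⟩ := id hΓM
    obtain ⟨C, hC⟩ :=
      hK.exists_bound_of_continuousOn (continuous_of_mem_coordRing hf).continuousOn
    have hbound : ∀ g ∈ M, |f g| ≤ C := fun g hg => by
      obtain ⟨k, hkK, γ, hγ, rfl⟩ := hKM hg
      have hkM : k ∈ M := (Subgroup.mul_mem_cancel_right _ hγ.2).1 hg
      exact hinv γ hγ k hkM ▸ hC k hkK
    intro g hg
    have hconst := eq_const_of_mem_linePoly_of_bounded ((isPolyMap_rpow g).comp_mem hf)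
      (fun t => hbound _ (hM.rpow_mem g hg t)) 1
    rw [rpow_one, rpow_zero] at hconst
    rw [hconst]
    exact h0 1 (one_mem _)

end UT

/-! ### The Lie correspondence and rational subgroups -/

namespace UT

variable {n : ℕ} {Γ L M N P : Subgroup (UT n)}

/-- The Lie algebra `log L` of a real algebraic subgroup `L` of `UT(n,ℝ)`. The linear span makes
it a subspace by definition; `IsRealAlgebraic.mem_lie_iff` shows that it adds nothing. -/
def lie (L : Subgroup (UT n)) : Submodule ℝ (StrictUpper n) := Submodule.span ℝ (log '' L)

theorem log_mem_lie {g : UT n} (hg : g ∈ L) : log g ∈ lie L :=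
  Submodule.subset_span (Set.mem_image_of_mem _ hg)

theorem lie_mono (h : M ≤ L) : lie M ≤ lie L := Submodule.span_mono (Set.image_mono h)

theorem IsRealAlgebraic.bot : IsRealAlgebraic (⊥ : Subgroup (UT n)) :=
  ⟨isClosed_singleton, by simp⟩

theorem IsRealAlgebraic.inf (hL : IsRealAlgebraic L) (hM : IsRealAlgebraic M) :
    IsRealAlgebraic (L ⊓ M) :=
  ⟨hL.isClosed.inter hM.isClosed, fun g hg t => ⟨hL.rpow_mem g hg.1 t, hM.rpow_mem g hg.2 t⟩⟩

theorem IsRealAlgebraic.exp_smul_mem (hL : IsRealAlgebraic L) {X : StrictUpper n}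
    (hX : exp X ∈ L) (t : ℝ) : exp (t • X) ∈ L :=
  exp_rpow X t ▸ hL.rpow_mem _ hX t

theorem IsRealAlgebraic.mem_lie_iff (hL : IsRealAlgebraic L) {X : StrictUpper n} :
    X ∈ lie L ↔ exp X ∈ L := by
  refine ⟨fun hX => ?_, fun hX => log_exp X ▸ log_mem_lie hX⟩
  induction hX using Submodule.span_induction with
  | mem X hX => obtain ⟨g, hg, rfl⟩ := hX; rwa [exp_log]
  | zero => exact exp_zero (n := n) ▸ one_mem L
  | add X Y _ _ hX hY =>
    refine hL.isClosed.mem_of_tendsto (tendsto_exp_mul_exp_pow X Y) (.of_forall fun k => ?_)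
    exact pow_mem (mul_mem (hL.exp_smul_mem hX _) (hL.exp_smul_mem hY _)) _
  | smul t X _ hX => exact hL.exp_smul_mem hX t

theorem IsRealAlgebraic.log_mem_lie_iff (hL : IsRealAlgebraic L) {g : UT n} :
    log g ∈ lie L ↔ g ∈ L := by
  rw [hL.mem_lie_iff, exp_log]

theorem IsRealAlgebraic.le_iff_lie_le (hM : IsRealAlgebraic M) : L ≤ M ↔ lie L ≤ lie M :=
  ⟨lie_mono, fun h _ hg => hM.log_mem_lie_iff.1 (h (log_mem_lie hg))⟩

theorem IsRealAlgebraic.eq_of_finrank_lie_le (hL : IsRealAlgebraic L) (hle : L ≤ M)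
    (hrank : Module.finrank ℝ (lie M) ≤ Module.finrank ℝ (lie L)) : L = M :=
  hle.antisymm <| hL.le_iff_lie_le.2 (Submodule.eq_of_le_of_finrank_le (lie_mono hle) hrank).ge

theorem IsRealAlgebraic.finrank_lie_lt (hL : IsRealAlgebraic L) (hlt : L < M) :
    Module.finrank ℝ (lie L) < Module.finrank ℝ (lie M) :=
  not_le.1 fun h => hlt.ne (hL.eq_of_finrank_lie_le hlt.le h)

theorem IsRealAlgebraic.mem_of_forall_linear (hL : IsRealAlgebraic L) {g : UT n}
    (h : ∀ l : StrictUpper n →ₗ[ℝ] ℝ, (∀ x ∈ L, l (log x) = 0) → l (log g) = 0) : g ∈ L := by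
  by_contra hg
  obtain ⟨l, hlg, hl⟩ := Submodule.exists_le_ker_of_notMem (mt hL.log_mem_lie_iff.1 hg)
  exact hlg (h l fun x hx => hl (log_mem_lie hx))

theorem IsRational.map_mem (hΓM : IsRational Γ M) (hM : IsRealAlgebraic M)
    (hL : IsRealAlgebraic L) {φ : UT n → UT n} (hφ : IsPolyMap (coordRing n) φ)
    (h : ∀ γ ∈ Γ ⊓ M, φ γ ∈ L) : ∀ g ∈ M, φ g ∈ L := fun g hg =>
  hL.mem_of_forall_linear fun l hl =>
    hΓM.eq_zero_of_mem_coordRing hM (hφ.linear_log_mem l) (fun γ hγ => hl _ (h γ hγ)) g hg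

theorem IsRealAlgebraic.map_mem_of_infinite (hL : IsRealAlgebraic L) {φ : ℝ → UT n}
    (hφ : IsPolyMap linePoly φ) {S : Set ℝ} (hS : S.Infinite) (h : ∀ t ∈ S, φ t ∈ L) (t : ℝ) :
    φ t ∈ L :=
  hL.mem_of_forall_linear fun l hl =>
    eq_zero_of_mem_linePoly (hφ.linear_log_mem l) hS (fun s hs => hl _ (h s hs)) t

theorem IsRealAlgebraic.map_mem_of_natCast (hL : IsRealAlgebraic L) {φ : ℝ → UT n}
    (hφ : IsPolyMap linePoly φ) (h : ∀ k : ℕ, φ k ∈ L) (t : ℝ) : φ t ∈ L :=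
  hL.map_mem_of_infinite hφ (Set.infinite_range_of_injective (Nat.cast_injective (R := ℝ)))
    (Set.forall_mem_range.2 h) t

theorem conj_rpow (g h : UT n) (t : ℝ) : (g * h * g⁻¹) ^ t = g * h ^ t * g⁻¹ := by
  have hpoly : IsPolyMap linePoly fun t : ℝ => (g * h * g⁻¹) ^ t * (g * h ^ t * g⁻¹)⁻¹ :=
    (isPolyMap_rpow _).mul (((IsPolyMap.const g).mul (isPolyMap_rpow h)).mul (.const _)).inv
  refine mul_inv_eq_one.1 (Subgroup.mem_bot.1
    (IsRealAlgebraic.bot.map_mem_of_natCast hpoly (fun k => Subgroup.mem_bot.2 ?_) t))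
  rw [rpow_natCast, rpow_natCast, conj_pow, mul_inv_cancel]

theorem mem_conj_smul_iff {G : Type*} [Group G] {L : Subgroup G} {g x : G} :
    x ∈ MulAut.conj g • L ↔ g⁻¹ * x * g ∈ L := by
  rw [Subgroup.mem_pointwise_smul_iff_inv_smul_mem, ← map_inv, MulAut.smul_def,
    MulAut.conj_apply, inv_inv]

theorem continuous_conj_smul (g : UT n) : Continuous fun x : UT n => MulAut.conj g • x := by
  simp only [MulAut.smul_def, MulAut.conj_apply]
  fun_prop

theorem IsRealAlgebraic.conj (hL : IsRealAlgebraic L) (g : UT n) :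
    IsRealAlgebraic (MulAut.conj g • L) where
  isClosed := by
    rw [Subgroup.coe_pointwise_smul, ← Set.preimage_smul_inv, ← map_inv]
    exact hL.isClosed.preimage (continuous_conj_smul g⁻¹)
  rpow_mem x hx t := by
    rw [mem_conj_smul_iff] at hx ⊢
    have hconj := conj_rpow g⁻¹ x t
    rw [inv_inv] at hconj
    exact hconj ▸ hL.rpow_mem _ hx t

theorem IsRational.conj (hL : IsRational Γ L) {γ : UT n} (hγ : γ ∈ Γ) :
    IsRational Γ (MulAut.conj γ • L) := by
  obtain ⟨K, hK, hKL⟩ := hL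
  have hΓ : MulAut.conj γ • Γ = Γ := Subgroup.conj_smul_eq_self_of_mem hγ
  have hinf : Γ ⊓ MulAut.conj γ • L = MulAut.conj γ • (Γ ⊓ L) := by rw [Subgroup.smul_inf, hΓ]
  refine ⟨MulAut.conj γ • K, hK.image (continuous_conj_smul γ), ?_⟩
  rw [hinf, Subgroup.coe_pointwise_smul, Subgroup.coe_pointwise_smul, ← smul_mul']
  exact Set.smul_set_mono hKL

theorem inv_pow_mul_mul_pow_mem {G : Type*} [Group G] {P : Subgroup G} {a b : G}
    (ha : a ∈ Subgroup.normalizer (P : Set G)) (hb : b ∈ P) (k : ℕ) :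
    (a ^ k)⁻¹ * (a * b) ^ k ∈ P := by
  induction k with
  | zero => simp
  | succ k ih =>
    have hsucc : (a ^ (k + 1))⁻¹ * (a * b) ^ (k + 1) =
        (a⁻¹ * ((a ^ k)⁻¹ * (a * b) ^ k) * a) * b := by
      rw [pow_succ, pow_succ]; group
    exact hsucc ▸ mul_mem ((Subgroup.mem_normalizer_iff''.1 ha _).1 ih) hb

theorem IsRealAlgebraic.rpow_mem_normalizer (hP : IsRealAlgebraic P) {a : UT n}
    (ha : a ∈ Subgroup.normalizer (P : Set (UT n))) (t : ℝ) :
    a ^ t ∈ Subgroup.normalizer (P : Set (UT n)) := by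
  have hconj : ∀ t : ℝ, ∀ x ∈ P, a ^ t * x * (a ^ t)⁻¹ ∈ P := fun t x hx =>
    hP.map_mem_of_natCast (((isPolyMap_rpow a).mul (.const x)).mul (isPolyMap_rpow a).inv)
      (fun k => by
        rw [rpow_natCast]
        exact (Subgroup.mem_normalizer_iff.1 (pow_mem ha k) x).1 hx) t
  refine Subgroup.mem_normalizer_iff.2 fun x => ⟨hconj t x, fun hx => ?_⟩
  have hback := hconj (-t) _ hx
  rw [rpow_neg] at hback
  simpa [mul_assoc] using hback

theorem IsRealAlgebraic.inv_mul_mem_iff (hP : IsRealAlgebraic P) {a g : UT n}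
    (ha : a ∈ Subgroup.normalizer (P : Set (UT n))) :
    a⁻¹ * g ∈ P ↔ log g - log a ∈ lie P := by
  constructor
  · intro h
    have hrpow : ∀ s : ℝ, (a ^ s)⁻¹ * g ^ s ∈ P := by
      refine hP.map_mem_of_natCast ((isPolyMap_rpow a).inv.mul (isPolyMap_rpow g)) fun k => ?_
      simpa [rpow_natCast] using inv_pow_mul_mul_pow_mem ha h k
    have hlim := tendsto_exp_mul_exp_pow (log a⁻¹) (log g)
    rw [log_inv, neg_add_eq_sub] at hlim
    refine hP.mem_lie_iff.2 (hP.isClosed.mem_of_tendsto hlim (.of_forall fun k => pow_mem ?_ _))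
    rw [← log_inv, ← rpow_def, ← rpow_def, inv_rpow]
    exact hrpow _
  · intro h
    have hlim := (tendsto_exp_mul_exp_pow (log a) (log g - log a)).const_mul a⁻¹
    rw [add_sub_cancel, exp_log] at hlim
    refine hP.isClosed.mem_of_tendsto hlim (.of_forall fun k => ?_)
    have hmem := inv_pow_mul_mul_pow_mem (hP.rpow_mem_normalizer ha (k + 1 : ℝ)⁻¹)
      (hP.mem_lie_iff.1 (Submodule.smul_mem _ (k + 1 : ℝ)⁻¹ h)) (k + 1)
    rw [← rpow_natCast, ← rpow_mul, Nat.cast_succ, inv_mul_cancel₀ (by positivity),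
      rpow_one] at hmem
    exact hmem

theorem finite_inter_of_discrete [DiscreteTopology Γ] {K : Set (UT n)} (hK : IsCompact K) :
    (K ∩ Γ).Finite := by
  have hfin := Subgroup.tendsto_coe_cofinite_of_discrete Γ ⟨inferInstance⟩ hK.compl_mem_cocompact
  rw [Filter.mem_map, Filter.mem_cofinite, ← Set.preimage_compl, compl_compl] at hfin
  exact Set.inter_comm K Γ ▸ Subtype.image_preimage_coe (Γ : Set (UT n)) K ▸ hfin.image Subtype.val

theorem isRational_inf_iff (h : L ≤ M) : IsRational (Γ ⊓ M) L ↔ IsRational Γ L := by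
  rw [IsRational, inf_assoc, inf_eq_right.2 h, IsRational]

theorem IsRational.exists_isCompact_subset (hΓL : IsRational Γ L) (hL : IsRealAlgebraic L) :
    ∃ K ⊆ (L : Set (UT n)), IsCompact K ∧ (L : Set (UT n)) ⊆ K * (Γ ⊓ L : Subgroup (UT n)) := by
  obtain ⟨K, hK, hKL⟩ := hΓL
  refine ⟨K ∩ L, Set.inter_subset_right, hK.inter_right hL.isClosed, fun g hg => ?_⟩
  obtain ⟨k, hk, γ, hγ, rfl⟩ := hKL hg
  exact ⟨k, ⟨hk, (L.mul_mem_cancel_right hγ.2).1 hg⟩, γ, hγ, rfl⟩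

theorem IsRational.inf [DiscreteTopology Γ] (hL : IsRational Γ L) (hM : IsRational Γ M) :
    IsRational Γ (L ⊓ M) := by
  obtain ⟨K, hK, hKL⟩ := hL
  obtain ⟨K', hK', hKM⟩ := hM
  let P : UT n → UT n → Prop := fun δ a => a ∈ Γ ⊓ L ∧ δ * a ∈ M
  have hchoice : ∀ δ, ∃ a, (∃ a, P δ a) → P δ a := fun δ => by
    by_cases h : ∃ a, P δ a
    · exact h.imp fun a ha _ => ha
    · exact ⟨1, fun h' => absurd h' h⟩
  choose a ha using hchoice
  have hfin : (K'⁻¹ * K ∩ Γ).Finite := finite_inter_of_discrete (hK'.inv.mul hK)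
  refine ⟨K * a '' (K'⁻¹ * K ∩ Γ), hK.mul (hfin.image a).isCompact, ?_⟩
  intro g hg
  obtain ⟨k, hk, γ, hγ, hkγ : k * γ = g⟩ := hKL hg.1
  obtain ⟨k', hk', γ', hγ', he : k' * γ' = g⟩ := hKM hg.2
  have hδ : k'⁻¹ * k = γ' * γ⁻¹ := by
    rw [eq_mul_inv_iff_mul_eq, mul_assoc, hkγ, ← he, inv_mul_cancel_left]
  have hP : P (k'⁻¹ * k) (a (k'⁻¹ * k)) := ha _ ⟨γ, hγ, by simpa [hδ] using hγ'.2⟩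
  set δ := k'⁻¹ * k
  have hδΓ : δ ∈ Γ := hδ ▸ mul_mem hγ'.1 (inv_mem hγ.1)
  have hsplit : (a δ)⁻¹ * γ = (δ * a δ)⁻¹ * γ' := by
    rw [mul_inv_rev, hδ]; group
  have hmem : (a δ)⁻¹ * γ ∈ Γ ⊓ (L ⊓ M) := by
    rw [← inf_assoc]
    exact ⟨mul_mem (inv_mem hP.1 : _ ∈ Γ ⊓ L) hγ,
      hsplit ▸ mul_mem (inv_mem hP.2 : _ ∈ M) hγ'.2⟩
  have hδK : δ ∈ K'⁻¹ * K := Set.mul_mem_mul (Set.inv_mem_inv.2 hk') hk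
  exact Set.mem_mul.2 ⟨k * a δ, Set.mul_mem_mul hk ⟨δ, ⟨hδK, hδΓ⟩, rfl⟩, _, hmem, by
    rw [← hkγ]; group⟩

/-- The subgroup `L` is the `Γ`-rational hull of `S`: the least `Γ`-rational real algebraic
subgroup containing `S`. -/
structure IsRationalHull (Γ : Subgroup (UT n)) (S : Set (UT n)) (L : Subgroup (UT n)) : Prop where
  isRealAlgebraic : IsRealAlgebraic L
  isRational : IsRational Γ L
  subset : S ⊆ L
  le : ∀ L' : Subgroup (UT n), IsRealAlgebraic L' → IsRational Γ L' → S ⊆ L' → L ≤ L'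

theorem exists_isRationalHull [DiscreteTopology Γ] (hM : IsRealAlgebraic M)
    (hΓM : IsRational Γ M) {S : Set (UT n)} (hS : S ⊆ M) : ∃ L, IsRationalHull Γ S L := by
  obtain ⟨L, ⟨hL, hΓL, hSL⟩, hmin⟩ := exists_minimalFor_of_wellFoundedLT
    (fun L : Subgroup (UT n) => IsRealAlgebraic L ∧ IsRational Γ L ∧ S ⊆ L)
    (fun L => Module.finrank ℝ (lie L)) ⟨M, hM, hΓM, hS⟩
  refine ⟨L, hL, hΓL, hSL, fun L' hL' hΓL' hSL' => ?_⟩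
  have hinf := hL.inf hL'
  exact inf_eq_left.1 <| hinf.eq_of_finrank_lie_le inf_le_left <|
    hmin ⟨hinf, hΓL.inf hΓL', Set.subset_inter hSL hSL'⟩
      (Submodule.finrank_mono (lie_mono inf_le_left))

/-- Conjugation by lattice elements permutes the rational subgroups, hence fixes the hull of an
invariant set; the rest is Borel density. -/
theorem IsRationalHull.le_normalizer {S : Set (UT n)} (hL : IsRationalHull Γ S L)
    (hM : IsRealAlgebraic M) (hΓM : IsRational Γ M) (hS : ∀ g ∈ M, ∀ x ∈ S, g * x * g⁻¹ ∈ S) :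
    M ≤ Subgroup.normalizer (L : Set (UT n)) := by
  refine Subgroup.le_normalizer_iff.2 fun m hm x hx => ?_
  refine hΓM.map_mem hM hL.isRealAlgebraic
    ((isPolyMap_id.mul (.const x)).mul isPolyMap_id.inv) (fun γ hγ => ?_) m hm
  have hle : L ≤ MulAut.conj γ⁻¹ • L :=
    hL.le _ (hL.isRealAlgebraic.conj _) (hL.isRational.conj (inv_mem hγ.1)) fun y hy => by
      rw [SetLike.mem_coe, mem_conj_smul_iff, inv_inv]
      exact hL.subset (hS γ hγ.2 y hy)
  simpa only [mem_conj_smul_iff, inv_inv] using hle hx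

theorem IsRational.lie_inf (hΓL : IsRational Γ L) (hL : IsRealAlgebraic L) :
    lie (Γ ⊓ L) = lie L := by
  refine le_antisymm (lie_mono inf_le_right) fun X hX => ?_
  by_contra hX'
  obtain ⟨l, hlX, hl⟩ := Submodule.exists_le_ker_of_notMem hX'
  have hzero := hΓL.eq_zero_of_mem_coordRing hL (isPolyMap_id.linear_log_mem l)
    (fun γ hγ => hl (log_mem_lie hγ)) (exp X) (hL.mem_lie_iff.1 hX)
  rw [log_exp] at hzero
  exact hlX hzero

/-- A rational subgroup is determined by a finite subset of `Γ` whose logarithms span its Lie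
algebra. -/
theorem countable_isRational [DiscreteTopology Γ] :
    {L : Subgroup (UT n) | IsRealAlgebraic L ∧ IsRational Γ L}.Countable := by
  have hΓ : (Γ : Set (UT n)).Countable :=
    Set.countable_coe_iff.1 (TopologicalSpace.separableSpace_iff_countable.1 inferInstance)
  refine ((Set.countable_ofPred_finite_subset hΓ).biUnion
    (t := fun t _ => {L | IsRealAlgebraic L ∧ lie L = Submodule.span ℝ (log '' t)})
    fun t _ => Set.Subsingleton.countable ?_).mono ?_
  · rintro L ⟨hL, hLt⟩ L' ⟨hL', hLt'⟩
    exact le_antisymm (hL'.le_iff_lie_le.2 (hLt.trans hLt'.symm).le)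
      (hL.le_iff_lie_le.2 (hLt'.trans hLt.symm).le)
  · rintro L ⟨hL, hΓL⟩
    obtain ⟨b, hb, hspan, hindep⟩ :=
      exists_linearIndependent ℝ (log '' ((Γ ⊓ L : Subgroup (UT n)) : Set (UT n)))
    obtain ⟨t, ht, htfin, rfl⟩ := (Set.exists_subset_image_finite_and (p := fun s => s = b)).1
      ⟨b, hb, hindep.setFinite, rfl⟩
    simp only [Set.mem_iUnion]
    exact ⟨t, ⟨htfin, fun x hx => (ht hx).1⟩, hL, by rw [hspan, ← hΓL.lie_inf hL]; rfl⟩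

end UT

/-! ### Central steps of a rational normal series -/

namespace UT

open scoped commutatorElement

variable {n : ℕ} {Γ M N : Subgroup (UT n)} {ζ : UT n}

theorem toMatrix_commutator_sub_one_mem {k : ℕ} {g : UT n} (h : UT n)
    (hg : toMatrix g - 1 ∈ superdiag ℝ n k) : toMatrix ⁅h, g⁆ - 1 ∈ superdiag ℝ n (k + 1) := by
  have hbracket : toMatrix h * toMatrix g - toMatrix g * toMatrix h ∈ superdiag ℝ n (k + 1) := by
    have hsplit : toMatrix h * toMatrix g - toMatrix g * toMatrix h =
        (toMatrix h - 1) * (toMatrix g - 1) - (toMatrix g - 1) * (toMatrix h - 1) := by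
      noncomm_ring
    rw [hsplit]
    exact sub_mem (superdiag.antitone (by omega) (superdiag.mul_mem (toMatrix_sub_one_mem h) hg))
      (superdiag.mul_mem hg (toMatrix_sub_one_mem h))
  have hfactor : toMatrix ⁅h, g⁆ - 1 =
      (toMatrix h * toMatrix g - toMatrix g * toMatrix h) * toMatrix (h⁻¹ * g⁻¹) := by
    rw [sub_mul, ← map_mul, ← map_mul, ← map_mul, ← map_mul, ← map_one toMatrix]
    congr 2 <;> group
  have hupper : toMatrix (h⁻¹ * g⁻¹) ∈ superdiag ℝ n 0 := by
    simpa using add_mem (superdiag.antitone zero_le_one (toMatrix_sub_one_mem (h⁻¹ * g⁻¹)))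
      superdiag.one_mem
  rw [hfactor, ← add_zero (k + 1)]
  exact superdiag.mul_mem hbracket hupper

/-- The subgroup `N` is a `Γ`-rational real algebraic subgroup of `M` normalised by `M`. -/
structure IsRationalNormal (Γ M N : Subgroup (UT n)) : Prop where
  isRealAlgebraic : IsRealAlgebraic N
  isRational : IsRational Γ N
  le : N ≤ M
  le_normalizer : M ≤ Subgroup.normalizer (N : Set (UT n))

theorem IsRationalNormal.conj_mem (hN : IsRationalNormal Γ M N) {m x : UT n} (hm : m ∈ M)
    (hx : x ∈ N) : m * x * m⁻¹ ∈ N :=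
  Subgroup.le_normalizer_iff.1 hN.le_normalizer m hm x hx

theorem IsRationalNormal.inv_conj_mem (hN : IsRationalNormal Γ M N) {m x : UT n} (hm : m ∈ M)
    (hx : x ∈ N) : m⁻¹ * x * m ∈ N := by
  simpa using hN.conj_mem (inv_mem hm) hx

/-- The lattice element `ζ` spans a one-parameter subgroup which is nontrivial and central in
`M / N`. -/
structure IsCentralStep (Γ M N : Subgroup (UT n)) (ζ : UT n) : Prop where
  mem_lattice : ζ ∈ Γ
  notMem : ζ ∉ N
  rpow_mem : ∀ t : ℝ, ζ ^ t ∈ M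
  commutator_mem : ∀ m ∈ M, ∀ t : ℝ, ⁅m, ζ ^ t⁆ ∈ N

theorem IsRationalNormal.commutator_rpow_mem (hN : IsRationalNormal Γ M N) {m : UT n}
    (hζ : ζ ∈ M) (h : ⁅m, ζ⁆ ∈ N) (t : ℝ) : ⁅m, ζ ^ t⁆ ∈ N := by
  refine hN.isRealAlgebraic.map_mem_of_natCast ((((IsPolyMap.const m).mul
    (isPolyMap_rpow ζ)).mul (IsPolyMap.const m).inv).mul (isPolyMap_rpow ζ).inv) (fun k => ?_) t
  rw [rpow_natCast, ← commutatorElement_def]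
  induction k with
  | zero => simp
  | succ k ih =>
    have hsucc : ⁅m, ζ ^ (k + 1)⁆ = ⁅m, ζ ^ k⁆ * (ζ ^ k * ⁅m, ζ⁆ * (ζ ^ k)⁻¹) := by
      simp only [commutatorElement_def, pow_succ]; group
    exact hsucc ▸ mul_mem ih (hN.conj_mem (pow_mem hζ k) h)

/-- Among the lattice elements outside `N`, one of maximal depth commutes with the lattice
modulo `N`, hence by Borel density with `M`. -/
theorem IsRationalNormal.exists_isCentralStep (hN : IsRationalNormal Γ M N) (hΓM : Γ ≤ M)
    (hM : IsRealAlgebraic M) (hMΓ : IsRational Γ M) (hne : N ≠ M) :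
    ∃ ζ, IsCentralStep Γ M N ζ := by
  have hlattice : ¬ ∀ ζ ∈ Γ, toMatrix ζ - 1 ∈ superdiag ℝ n 0 → ζ ∈ N := fun h =>
    hne <| hN.le.antisymm <| hMΓ.map_mem hM hN.isRealAlgebraic isPolyMap_id fun γ hγ =>
      h γ hγ.1 (superdiag.antitone zero_le_one (toMatrix_sub_one_mem γ))
  have hdeep : ∀ ζ ∈ Γ, toMatrix ζ - 1 ∈ superdiag ℝ n n → ζ ∈ N := fun ζ _ hζ => by
    have hone : toMatrix ζ = toMatrix 1 := by
      rw [map_one, sub_eq_zero.1 (superdiag.eq_zero hζ le_rfl)]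
    exact toMatrix_injective hone ▸ one_mem N
  obtain ⟨k, hk, hk'⟩ := Nat.exists_not_and_succ_of_not_zero_of_exists
    (p := fun k => ∀ ζ ∈ Γ, toMatrix ζ - 1 ∈ superdiag ℝ n k → ζ ∈ N) hlattice ⟨n, hdeep⟩
  push Not at hk
  obtain ⟨ζ, hζΓ, hζk, hζN⟩ := hk
  refine ⟨ζ, hζΓ, hζN, hM.rpow_mem ζ (hΓM hζΓ), fun m hm => hN.commutator_rpow_mem (hΓM hζΓ) ?_⟩
  refine hMΓ.map_mem hM hN.isRealAlgebraic (((isPolyMap_id.mul (.const ζ)).mul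
    isPolyMap_id.inv).mul (IsPolyMap.const ζ).inv) (fun γ hγ => ?_) m hm
  rw [← commutatorElement_def]
  refine hk' _ ?_ (toMatrix_commutator_sub_one_mem γ hζk)
  exact mul_mem (mul_mem (mul_mem hγ.1 hζΓ) (inv_mem hγ.1)) (inv_mem hζΓ)

/-- The one-parameter subgroup through `ζ`. -/
def line (ζ : UT n) : Subgroup (UT n) where
  carrier := Set.range fun t : ℝ => ζ ^ t
  one_mem' := ⟨0, rpow_zero ζ⟩
  mul_mem' := by
    rintro _ _ ⟨s, rfl⟩ ⟨t, rfl⟩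
    exact ⟨s + t, rpow_add ζ s t⟩
  inv_mem' := by
    rintro _ ⟨t, rfl⟩
    exact ⟨-t, rpow_neg ζ t⟩

theorem rpow_mem_line (ζ : UT n) (t : ℝ) : ζ ^ t ∈ line ζ := ⟨t, rfl⟩

theorem mem_line_sup_iff (h : line ζ ≤ Subgroup.normalizer (N : Set (UT n))) {g : UT n} :
    g ∈ line ζ ⊔ N ↔ ∃ t : ℝ, (ζ ^ t)⁻¹ * g ∈ N := by
  rw [← SetLike.mem_coe, Subgroup.coe_mul_of_left_le_normalizer_right _ _ h]
  constructor
  · rintro ⟨_, ⟨t, rfl⟩, x, hx, rfl⟩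
    exact ⟨t, by simpa using hx⟩
  · rintro ⟨t, ht⟩
    exact ⟨ζ ^ t, rpow_mem_line ζ t, _, ht, mul_inv_cancel_left _ _⟩

theorem IsRealAlgebraic.line_sup (hN : IsRealAlgebraic N)
    (h : line ζ ≤ Subgroup.normalizer (N : Set (UT n))) : IsRealAlgebraic (line ζ ⊔ N) := by
  have hlog : ∀ g, g ∈ line ζ ⊔ N ↔ log g ∈ lie N ⊔ Submodule.span ℝ {log ζ} := fun g => by
    rw [mem_line_sup_iff h, Submodule.mem_sup]
    constructor
    · rintro ⟨t, ht⟩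
      exact ⟨_, (hN.inv_mul_mem_iff (h (rpow_mem_line ζ t))).1 ht, log (ζ ^ t),
        Submodule.mem_span_singleton.2 ⟨t, (log_rpow ζ t).symm⟩, sub_add_cancel _ _⟩
    · rintro ⟨X, hX, _, hZ, hsum⟩
      obtain ⟨t, rfl⟩ := Submodule.mem_span_singleton.1 hZ
      refine ⟨t, (hN.inv_mul_mem_iff (h (rpow_mem_line ζ t))).2 ?_⟩
      rwa [log_rpow, ← hsum, add_sub_cancel_right]
  refine ⟨?_, fun g hg t => ?_⟩
  · rw [show ((line ζ ⊔ N : Subgroup (UT n)) : Set (UT n)) = log ⁻¹' _ from Set.ext hlog]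
    exact (Submodule.closed_of_finiteDimensional _).preimage continuous_log
  · rw [hlog] at hg ⊢
    exact log_rpow g t ▸ Submodule.smul_mem _ t hg

theorem IsRational.line_sup (hN : IsRational Γ N) (hζ : ζ ∈ Γ)
    (h : line ζ ≤ Subgroup.normalizer (N : Set (UT n))) : IsRational Γ (line ζ ⊔ N) := by
  obtain ⟨K, hK, hKN⟩ := hN
  refine ⟨(fun t : ℝ => ζ ^ t) '' Set.Icc 0 1 * K,
    (isCompact_Icc.image (continuous_rpow_const ζ)).mul hK, fun g hg => ?_⟩
  obtain ⟨t, ht⟩ := (mem_line_sup_iff h).1 hg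
  have hconj : ζ ^ ⌊t⌋ * ((ζ ^ t)⁻¹ * g) * (ζ ^ ⌊t⌋)⁻¹ ∈ N :=
    (Subgroup.mem_normalizer_iff.1 (h (rpow_intCast ζ ⌊t⌋ ▸ rpow_mem_line ζ _)) _).1 ht
  obtain ⟨k, hk, γ, hγ, hkγ : k * γ = _⟩ := hKN hconj
  have hζ' : ζ ∈ line ζ ⊔ N := Subgroup.mem_sup_left ⟨1, rpow_one ζ⟩
  refine Set.mem_mul.2 ⟨ζ ^ Int.fract t * k, Set.mul_mem_mul
    ⟨_, ⟨Int.fract_nonneg t, (Int.fract_lt_one t).le⟩, rfl⟩ hk, γ * ζ ^ ⌊t⌋,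
    mul_mem (⟨hγ.1, Subgroup.mem_sup_right hγ.2⟩ : γ ∈ Γ ⊓ (line ζ ⊔ N))
      (zpow_mem (⟨hζ, hζ'⟩ : ζ ∈ Γ ⊓ (line ζ ⊔ N)) _), ?_⟩
  have hfract : ζ ^ t = ζ ^ Int.fract t * ζ ^ ⌊t⌋ := by
    rw [← rpow_intCast, ← rpow_add, Int.fract_add_floor]
  rw [mul_assoc, ← mul_assoc k, hkγ, hfract]
  group

namespace IsCentralStep

theorem line_le (hζ : IsCentralStep Γ M N ζ) : line ζ ≤ M := by
  rintro _ ⟨t, rfl⟩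
  exact hζ.rpow_mem t

theorem isRationalNormal_line_sup (hζ : IsCentralStep Γ M N ζ) (hN : IsRationalNormal Γ M N) :
    IsRationalNormal Γ M (line ζ ⊔ N) := by
  have hnorm := hζ.line_le.trans hN.le_normalizer
  refine ⟨hN.isRealAlgebraic.line_sup hnorm, hN.isRational.line_sup hζ.mem_lattice hnorm,
    sup_le hζ.line_le hN.le, Subgroup.le_normalizer_iff.2 fun m hm g hg => ?_⟩
  obtain ⟨t, ht⟩ := (mem_line_sup_iff hnorm).1 hg
  have hsplit : m * g * m⁻¹ = ⁅m, ζ ^ t⁆ * ζ ^ t * (m * ((ζ ^ t)⁻¹ * g) * m⁻¹) := by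
    rw [commutatorElement_def]; group
  rw [hsplit]
  exact mul_mem (mul_mem (Subgroup.mem_sup_right (hζ.commutator_mem m hm t))
    (Subgroup.mem_sup_left (rpow_mem_line ζ t))) (Subgroup.mem_sup_right (hN.conj_mem hm ht))

theorem lt_line_sup (hζ : IsCentralStep Γ M N ζ) : N < line ζ ⊔ N :=
  lt_of_le_of_ne le_sup_right fun h =>
    hζ.notMem (h ▸ Subgroup.mem_sup_left ⟨1, rpow_one ζ⟩)

theorem exists_rpow_mul_eq (hζ : IsCentralStep Γ M N ζ) {m : UT n} (hm : m ∈ M) (t : ℝ) :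
    ∃ x ∈ N, m * ζ ^ t = ζ ^ t * m * x := by
  refine ⟨⁅m⁻¹, ζ ^ (-t)⁆, hζ.commutator_mem _ (inv_mem hm) _, ?_⟩
  rw [commutatorElement_def, rpow_neg]
  group

end IsCentralStep

end UT

/-! ### Closed invariant sets -/

namespace UT

variable {n : ℕ} {Γ M N : Subgroup (UT n)} {R Y : Set (UT n)} {ζ : UT n}

/-- A nonempty closed subset of `M`, invariant under `R` on the left and under `N` and `Γ` on the
right. Such sets are the nonempty closed `R`-invariant subsets of the nilmanifold `M / NΓ`. -/
structure IsInvariant (Γ M N : Subgroup (UT n)) (R Y : Set (UT n)) : Prop where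
  isClosed : IsClosed Y
  subset : Y ⊆ M
  nonempty : Y.Nonempty
  left_mul : ∀ r ∈ R, ∀ y ∈ Y, r * y ∈ Y
  mul_mem : ∀ y ∈ Y, ∀ x ∈ N, y * x ∈ Y
  mul_lattice : ∀ y ∈ Y, ∀ γ ∈ Γ, y * γ ∈ Y

/-- The action of `R` on `M / NΓ` is minimal. -/
def IsMinimalMod (Γ M : Subgroup (UT n)) (R : Set (UT n)) (N : Subgroup (UT n)) : Prop :=
  ∀ Y, IsInvariant Γ M N R Y → (M : Set (UT n)) ⊆ Y

theorem isMinimalMod_self : IsMinimalMod Γ M R M := fun _ hY g hg => by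
  obtain ⟨y, hy⟩ := hY.nonempty
  simpa using hY.mul_mem y hy (y⁻¹ * g) (mul_mem (inv_mem (hY.subset hy)) hg)

theorem IsMinimalMod.eq_of_invariant {E : Type*} [TopologicalSpace E] [T1Space E]
    (h : IsMinimalMod Γ M R N) (hM : IsRealAlgebraic M) (hΓM : Γ ≤ M) (hNM : N ≤ M)
    (hRM : R ⊆ M) {f : UT n → E} (hf : ContinuousOn f M)
    (hR : ∀ r ∈ R, ∀ g ∈ M, f (r * g) = f g) (hN : ∀ g ∈ M, ∀ x ∈ N, f (g * x) = f g)
    (hΓ : ∀ g ∈ M, ∀ γ ∈ Γ, f (g * γ) = f g) : ∀ g ∈ M, f g = f 1 := fun _ hg =>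
  (h (M ∩ f ⁻¹' {f 1})
    { isClosed := hf.preimage_isClosed_of_isClosed hM.isClosed isClosed_singleton
      subset := Set.inter_subset_left
      nonempty := ⟨1, one_mem M, rfl⟩
      left_mul := fun r hr y hy => ⟨mul_mem (hRM hr) hy.1, (hR r hr y hy.1).trans hy.2⟩
      mul_mem := fun y hy x hx => ⟨mul_mem hy.1 (hNM hx), (hN y hy.1 x hx).trans hy.2⟩
      mul_lattice := fun y hy γ hγ =>
        ⟨mul_mem hy.1 (hΓM hγ), (hΓ y hy.1 γ hγ).trans hy.2⟩ } hg).2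

namespace IsInvariant

theorem inter {Z : Set (UT n)} (hY : IsInvariant Γ M N R Y) (hZ : IsInvariant Γ M N R Z)
    (h : (Y ∩ Z).Nonempty) : IsInvariant Γ M N R (Y ∩ Z) where
  isClosed := hY.isClosed.inter hZ.isClosed
  subset := Set.inter_subset_left.trans hY.subset
  nonempty := h
  left_mul r hr y hy := ⟨hY.left_mul r hr y hy.1, hZ.left_mul r hr y hy.2⟩
  mul_mem y hy x hx := ⟨hY.mul_mem y hy.1 x hx, hZ.mul_mem y hy.2 x hx⟩
  mul_lattice y hy γ hγ := ⟨hY.mul_lattice y hy.1 γ hγ, hZ.mul_lattice y hy.2 γ hγ⟩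

theorem sInter {c : Set (Set (UT n))} (hc : ∀ Y ∈ c, IsInvariant Γ M N R Y) (hne : c.Nonempty)
    (h : (⋂₀ c).Nonempty) : IsInvariant Γ M N R (⋂₀ c) where
  isClosed := isClosed_sInter fun Y hY => (hc Y hY).isClosed
  subset := (Set.sInter_subset_of_mem hne.some_mem).trans (hc _ hne.some_mem).subset
  nonempty := h
  left_mul r hr y hy Y hY := (hc Y hY).left_mul r hr y (hy Y hY)
  mul_mem y hy x hx Y hY := (hc Y hY).mul_mem y (hy Y hY) x hx
  mul_lattice y hy γ hγ Y hY := (hc Y hY).mul_lattice y (hy Y hY) γ hγ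

theorem exists_minimal_subset (hΓM : IsRational Γ M) (hY : IsInvariant Γ M N R Y) :
    ∃ Z ⊆ Y, Minimal (IsInvariant Γ M N R) Z := by
  obtain ⟨K, hK, hKM⟩ := hΓM
  have hmeet : ∀ Z, IsInvariant Γ M N R Z → (Z ∩ K).Nonempty := fun Z hZ => by
    obtain ⟨z, hz⟩ := hZ.nonempty
    obtain ⟨k, hk, γ, hγ, rfl⟩ := hKM (hZ.subset hz)
    exact ⟨k, by simpa using hZ.mul_lattice _ hz γ⁻¹ (inv_mem hγ.1), hk⟩
  refine zorn_superset_nonempty {Z | IsInvariant Γ M N R Z} (fun c hc hchain hne =>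
    ⟨⋂₀ c, sInter (fun Z hZ => hc hZ) hne ?_, fun Z => Set.sInter_subset_of_mem⟩) Y hY
  have : Nonempty ((· ∩ K) '' c) := (hne.image _).to_subtype
  have hK_inter : (⋂₀ ((· ∩ K) '' c)).Nonempty := by
    refine IsCompact.nonempty_sInter_of_directed_nonempty_isCompact_isClosed ?_ ?_ ?_ ?_
    · rintro _ ⟨A, hA, rfl⟩ _ ⟨B, hB, rfl⟩
      rcases hchain.total hA hB with h | h
      · exact ⟨_, ⟨A, hA, rfl⟩, subset_rfl, Set.inter_subset_inter_left K h⟩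
      · exact ⟨_, ⟨B, hB, rfl⟩, Set.inter_subset_inter_left K h, subset_rfl⟩
    · exact Set.forall_mem_image.2 fun Z hZ => hmeet Z (hc hZ)
    · exact Set.forall_mem_image.2 fun Z hZ => hK.inter_left (hc hZ).isClosed
    · exact Set.forall_mem_image.2 fun Z hZ => (hc hZ).isClosed.inter hK.isClosed
  exact hK_inter.mono fun x hx Z hZ => (hx _ (Set.mem_image_of_mem _ hZ)).1

theorem translate (hY : IsInvariant Γ M N R Y) (hN : IsRationalNormal Γ M N)
    (hζ : IsCentralStep Γ M N ζ) (hΓM : Γ ≤ M) (t : ℝ) :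
    IsInvariant Γ M N R {z | z * ζ ^ t ∈ Y} where
  isClosed := hY.isClosed.preimage (continuous_mul_const _)
  subset z hz := (mul_mem_cancel_right (hζ.rpow_mem t)).1 (hY.subset hz)
  nonempty := hY.nonempty.elim fun y hy => ⟨y * (ζ ^ t)⁻¹, by simpa using hy⟩
  left_mul r hr z hz := by
    simpa only [Set.mem_ofPred_eq, mul_assoc] using hY.left_mul r hr _ hz
  mul_mem z hz x hx := by
    have hmem := hY.mul_mem _ hz _ (hN.inv_conj_mem (hζ.rpow_mem t) hx)
    simpa [mul_assoc] using hmem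
  mul_lattice z hz γ hγ := by
    obtain ⟨x, hx, hcomm⟩ := hζ.exists_rpow_mul_eq (hΓM hγ) t
    rw [Set.mem_ofPred_eq, mul_assoc, hcomm, ← mul_assoc, ← mul_assoc]
    exact hY.mul_mem _ (hY.mul_lattice _ hz γ hγ) x hx

theorem exists_mem_Icc (hY : IsInvariant Γ M N R Y) (hζ : ζ ∈ Γ) {z : UT n} {t : ℝ}
    (h : z * ζ ^ t ∈ Y) : ∃ s ∈ Set.Icc (0 : ℝ) 1, z * ζ ^ s ∈ Y := by
  refine ⟨Int.fract t, ⟨Int.fract_nonneg t, (Int.fract_lt_one t).le⟩, ?_⟩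
  have hmem := hY.mul_lattice _ h _ (inv_mem (zpow_mem hζ ⌊t⌋))
  rwa [← rpow_intCast, ← rpow_neg, mul_assoc, ← rpow_add, ← sub_eq_add_neg,
    Int.self_sub_floor] at hmem

theorem saturate (hY : IsInvariant Γ M N R Y) (hN : IsRationalNormal Γ M N)
    (hζ : IsCentralStep Γ M N ζ) (hΓM : Γ ≤ M) :
    IsInvariant Γ M (line ζ ⊔ N) R {z | ∃ t : ℝ, z * ζ ^ t ∈ Y} where
  isClosed := by
    have heq : {z | ∃ t : ℝ, z * ζ ^ t ∈ Y} = Y * (fun t : ℝ => ζ ^ (-t)) '' Set.Icc 0 1 := by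
      ext z
      constructor
      · rintro ⟨t, ht⟩
        obtain ⟨s, hs, hsY⟩ := hY.exists_mem_Icc hζ.mem_lattice ht
        exact Set.mem_mul.2 ⟨_, hsY, _, ⟨s, hs, rfl⟩, by simp [rpow_neg]⟩
      · rintro ⟨y, hy, _, ⟨s, -, rfl⟩, rfl⟩
        exact ⟨s, by simpa [rpow_neg] using hy⟩
    rw [heq]
    exact hY.isClosed.mul_right_of_isCompact
      (isCompact_Icc.image ((continuous_rpow_const ζ).comp continuous_neg))
  subset := by
    rintro z ⟨t, ht⟩
    exact (hY.translate hN hζ hΓM t).subset ht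
  nonempty := hY.nonempty.elim fun y hy => ⟨y, 0, by simpa using hy⟩
  left_mul := by
    rintro r hr z ⟨t, ht⟩
    exact ⟨t, (hY.translate hN hζ hΓM t).left_mul r hr z ht⟩
  mul_mem := by
    rintro z ⟨t, ht⟩ g hg
    obtain ⟨s, hs⟩ := (mem_line_sup_iff (hζ.line_le.trans hN.le_normalizer)).1 hg
    have hmem := (hY.translate hN hζ hΓM t).mul_mem z ht _ (hN.conj_mem (hζ.rpow_mem s) hs)
    refine ⟨t - s, ?_⟩
    rw [sub_eq_neg_add, rpow_add, rpow_neg]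
    simpa [mul_assoc] using hmem
  mul_lattice := by
    rintro z ⟨t, ht⟩ γ hγ
    exact ⟨t, (hY.translate hN hζ hΓM t).mul_lattice z ht γ hγ⟩

end IsInvariant

/-- The group of all `t` for which right translation by `ζ ^ t` preserves `Y`. -/
def periods (ζ : UT n) (Y : Set (UT n)) : AddSubgroup ℝ where
  carrier := {t | ∀ y, y * ζ ^ t ∈ Y ↔ y ∈ Y}
  zero_mem' := by simp
  add_mem' {s t} hs ht y := by rw [rpow_add, ← mul_assoc, ht, hs]
  neg_mem' {t} ht y := by rw [← ht, mul_assoc, ← rpow_add, neg_add_cancel, rpow_zero, mul_one]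

theorem mem_periods_of_mem (hY : Minimal (IsInvariant Γ M N R) Y) (hN : IsRationalNormal Γ M N)
    (hζ : IsCentralStep Γ M N ζ) (hΓM : Γ ≤ M) {y : UT n} {t : ℝ} (hy : y ∈ Y)
    (hyt : y * ζ ^ t ∈ Y) : t ∈ periods ζ Y := by
  have hsubset : ∀ s : ℝ, ∀ z ∈ Y, z * ζ ^ s ∈ Y → ∀ x ∈ Y, x * ζ ^ s ∈ Y :=
    fun s z hz hzs x hx => (hY.2 (hY.1.inter (hY.1.translate hN hζ hΓM s) ⟨z, hz, hzs⟩)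
      Set.inter_subset_left hx).2
  have hcancel : ∀ x : UT n, x * ζ ^ t * ζ ^ (-t) = x := fun x => by
    rw [mul_assoc, ← rpow_add, add_neg_cancel, rpow_zero, mul_one]
  refine fun x => ⟨fun hx => ?_, hsubset t y hy hyt x⟩
  exact hcancel x ▸ hsubset (-t) (y * ζ ^ t) hyt ((hcancel y).symm ▸ hy) _ hx

theorem isClosed_periods (hY : Minimal (IsInvariant Γ M N R) Y) (hN : IsRationalNormal Γ M N)
    (hζ : IsCentralStep Γ M N ζ) (hΓM : Γ ≤ M) : IsClosed (periods ζ Y : Set ℝ) := by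
  obtain ⟨y, hy⟩ := hY.1.nonempty
  have heq : (periods ζ Y : Set ℝ) = (fun t => y * ζ ^ t) ⁻¹' Y :=
    Set.ext fun t => ⟨fun ht => (ht y).2 hy, mem_periods_of_mem hY hN hζ hΓM hy⟩
  rw [heq]
  exact hY.1.isClosed.preimage (continuous_const.mul (continuous_rpow_const ζ))

/-! ### Circle-valued fibre coordinates -/

/-- A coordinate along the fibre circle of `M / NΓ → M / ⟨ζ ^ ℝ, N, Γ⟩` which is invariant
under `R`. Its period `a` need not be `1`. -/
structure IsFibreCoordinate (Γ M N : Subgroup (UT n)) (R : Set (UT n)) (ζ : UT n) {a : ℝ}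
    (w : UT n → AddCircle a) : Prop where
  continuousOn : ContinuousOn w M
  left_mul : ∀ r ∈ R, ∀ g ∈ M, w (r * g) = w g
  mul_mem : ∀ g ∈ M, ∀ x ∈ N, w (g * x) = w g
  mul_lattice : ∀ g ∈ M, ∀ γ ∈ Γ, w (g * γ) = w g
  mul_rpow : ∀ g ∈ M, ∀ t : ℝ, w (g * ζ ^ t) = w g + (t : AddCircle a)

theorem continuousOn_of_coe_eq_iff (hY : IsInvariant Γ M N R Y) (hζ : ζ ∈ Γ) {a : ℝ}
    {w : UT n → AddCircle a}
    (hw : ∀ g ∈ M, ∀ t : ℝ, (t : AddCircle a) = w g ↔ g * ζ ^ (-t) ∈ Y) : ContinuousOn w M := by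
  rw [continuousOn_iff_continuous_domRestrict, continuous_iff_isClosed]
  intro C hC
  have heq : (M : Set (UT n)).domRestrict w ⁻¹' C = Prod.fst '' {p : M × Set.Icc (0 : ℝ) 1 |
      (p.1 : UT n) * ζ ^ (p.2 : ℝ) ∈ Y ∧ ((-(p.2 : ℝ) : ℝ) : AddCircle a) ∈ C} := by
    ext ⟨g, hg⟩
    constructor
    · intro hgC
      obtain ⟨t, ht⟩ := QuotientAddGroup.mk_surjective (w g)
      obtain ⟨s, hs, hsY⟩ := hY.exists_mem_Icc hζ ((hw g hg t).1 ht)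
      refine ⟨(⟨g, hg⟩, ⟨s, hs⟩), ⟨hsY, ?_⟩, rfl⟩
      rwa [(hw g hg (-s)).2 (by rwa [neg_neg])]
    · rintro ⟨⟨⟨g', hg'⟩, s⟩, ⟨hsY, hsC⟩, hgg'⟩
      obtain rfl : g' = g := congrArg Subtype.val hgg'
      rwa [(hw g' hg (-s)).2 (by rwa [neg_neg])] at hsC
  rw [heq]
  refine isClosedMap_fst_of_compactSpace _ (IsClosed.inter ?_ ?_)
  · exact hY.isClosed.preimage ((continuous_subtype_val.comp continuous_fst).mul
      ((continuous_rpow_const ζ).comp (continuous_subtype_val.comp continuous_snd)))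
  · exact hC.preimage ((AddCircle.continuous_mk' a).comp
      (continuous_subtype_val.comp continuous_snd).neg)

theorem isFibreCoordinate_of_coe_eq_iff (hY : IsInvariant Γ M N R Y)
    (hN : IsRationalNormal Γ M N) (hζ : IsCentralStep Γ M N ζ) (hΓM : Γ ≤ M) (hRM : R ⊆ M)
    {a : ℝ} {w : UT n → AddCircle a}
    (hw : ∀ g ∈ M, ∀ t : ℝ, (t : AddCircle a) = w g ↔ g * ζ ^ (-t) ∈ Y) :
    IsFibreCoordinate Γ M N R ζ w := by
  have hsection : ∀ g ∈ M, ∃ t : ℝ, (t : AddCircle a) = w g ∧ g * ζ ^ (-t) ∈ Y := fun g hg =>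
    (QuotientAddGroup.mk_surjective (w g)).imp fun t ht => ⟨ht, (hw g hg t).1 ht⟩
  refine ⟨continuousOn_of_coe_eq_iff hY hζ.mem_lattice hw, fun r hr g hg => ?_,
    fun g hg x hx => ?_, fun g hg γ hγ => ?_, fun g hg t => ?_⟩
  · obtain ⟨t, ht, htY⟩ := hsection g hg
    rw [← ht, eq_comm, hw _ (mul_mem (hRM hr) hg)]
    exact (hY.translate hN hζ hΓM (-t)).left_mul r hr g htY
  · obtain ⟨t, ht, htY⟩ := hsection g hg
    rw [← ht, eq_comm, hw _ (mul_mem hg (hN.le hx))]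
    exact (hY.translate hN hζ hΓM (-t)).mul_mem g htY x hx
  · obtain ⟨t, ht, htY⟩ := hsection g hg
    rw [← ht, eq_comm, hw _ (mul_mem hg (hΓM hγ))]
    exact (hY.translate hN hζ hΓM (-t)).mul_lattice g htY γ hγ
  · obtain ⟨s, hs, hsY⟩ := hsection g hg
    rw [← hs, ← AddCircle.coe_add, eq_comm, hw _ (mul_mem hg (hζ.rpow_mem t)), mul_assoc,
      ← rpow_add]
    rwa [neg_add, add_neg_cancel_comm_assoc]

/-- The periods of a minimal set either fill the fibre, or are `aℤ` with `a ≠ 0`; in the second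
case the set is a section of the fibre circle `ℝ / aℤ`. -/
theorem exists_isFibreCoordinate (hY : Minimal (IsInvariant Γ M N R) Y)
    (hN : IsRationalNormal Γ M N) (hζ : IsCentralStep Γ M N ζ) (hΓM : Γ ≤ M) (hRM : R ⊆ M)
    (hmin : IsMinimalMod Γ M R (line ζ ⊔ N)) (hMY : ¬ (M : Set (UT n)) ⊆ Y) :
    ∃ (a : ℝ) (w : UT n → AddCircle a), a ≠ 0 ∧ IsFibreCoordinate Γ M N R ζ w := by
  have hsat : ∀ g ∈ M, ∃ t : ℝ, g * ζ ^ t ∈ Y := hmin _ (hY.1.saturate hN hζ hΓM)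
  rcases (periods ζ Y).dense_or_cyclic with hdense | ⟨a, ha⟩
  · refine absurd (fun g hg => ?_) hMY
    obtain ⟨t, ht⟩ := hsat g hg
    have hper : t ∈ (periods ζ Y : Set ℝ) :=
      (isClosed_periods hY hN hζ hΓM).closure_eq ▸ hdense t
    exact (hper g).1 ht
  rw [← AddSubgroup.zmultiples_eq_closure] at ha
  have hone : (1 : ℝ) ∈ periods ζ Y := by
    obtain ⟨y, hy⟩ := hY.1.nonempty
    exact mem_periods_of_mem hY hN hζ hΓM hy
      (by rw [rpow_one]; exact hY.1.mul_lattice y hy ζ hζ.mem_lattice)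
  have ha0 : a ≠ 0 := by
    rintro rfl
    simp [ha] at hone
  choose! τ hτ using hsat
  refine ⟨a, fun g => ((-τ g : ℝ) : AddCircle a), ha0,
    isFibreCoordinate_of_coe_eq_iff hY.1 hN hζ hΓM hRM fun g hg t => ?_⟩
  have hshift : g * ζ ^ (-t) = g * ζ ^ τ g * ζ ^ (-t + -τ g) := by
    rw [mul_assoc, ← rpow_add, add_neg_cancel_comm_assoc]
  have hcoe : (t : AddCircle a) = ((-τ g : ℝ) : AddCircle a) ↔ -t + -τ g ∈ periods ζ Y := by
    rw [ha]; exact QuotientAddGroup.eq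
  rw [hcoe, hshift]
  exact ⟨fun h => (h _).2 (hτ g hg), mem_periods_of_mem hY hN hζ hΓM (hτ g hg)⟩

end UT

/-! ### From fibre coordinates to characters -/

theorem eq_zero_of_forall_abs_add_nat_mul_le {c d C : ℝ} (h : ∀ k : ℕ, |c + k * d| ≤ C) :
    d = 0 := by
  by_contra hd
  obtain ⟨k, hk⟩ := exists_nat_gt ((C + |c|) / |d|)
  rw [div_lt_iff₀ (abs_pos.2 hd)] at hk
  have htriangle := abs_sub_abs_le_abs_sub ((k : ℝ) * d) (-c)
  rw [abs_neg, abs_mul, Nat.abs_cast, sub_neg_eq_add, add_comm _ c] at htriangle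
  linarith [h k]

namespace UT

open scoped commutatorElement

variable {n : ℕ} {Γ M N : Subgroup (UT n)} {R : Set (UT n)} {ζ : UT n} {a : ℝ} {W : UT n → ℝ}

theorem IsRealAlgebraic.isPreconnected (hM : IsRealAlgebraic M) :
    IsPreconnected (M : Set (UT n)) := by
  refine isPreconnected_of_forall 1 fun g hg => ⟨Set.range fun t : ℝ => g ^ t, ?_, ⟨0, rpow_zero g⟩,
    ⟨1, rpow_one g⟩, isPreconnected_range (continuous_rpow_const g)⟩
  rintro _ ⟨t, rfl⟩
  exact hM.rpow_mem g hg t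

/-- The logarithm identifies `M` with the simply connected space `lie M`. -/
theorem IsRealAlgebraic.exists_continuous_lift (hM : IsRealAlgebraic M) {w : UT n → AddCircle a}
    (hw : ContinuousOn w M) :
    ∃ W : UT n → ℝ, Continuous W ∧ W 1 = 0 ∧ ∀ g ∈ M, (W g : AddCircle a) = w g - w 1 := by
  have : LocallyConvexSpace ℝ (Matrix (Fin n) (Fin n) ℝ) :=
    inferInstanceAs (LocallyConvexSpace ℝ (Fin n → Fin n → ℝ))
  have hcont : Continuous fun X : lie M => w (exp (X : StrictUpper n)) - w 1 :=
    (hw.comp_continuous (continuous_exp.comp continuous_subtype_val)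
      fun X => hM.mem_lie_iff.1 X.2).sub continuous_const
  obtain ⟨F, ⟨hF0, hF⟩, -⟩ := (AddCircle.isCoveringMap_coe a).existsUnique_continuousMap_lifts
    ⟨_, hcont⟩ 0 (0 : ℝ) (by simp [exp_zero])
  obtain ⟨q, hq⟩ := Submodule.exists_isCompl (lie M)
  let p := Submodule.projectionOnto (lie M) q hq
  have hp : Continuous p := LinearMap.continuous_of_finiteDimensional (F' := lie M) p
  refine ⟨fun g => F (p (log g)), F.continuous.comp (hp.comp continuous_log),
    by simp [log_one, hF0], fun g hg => ?_⟩
  have hlog : p (log g) = ⟨log g, log_mem_lie hg⟩ :=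
    Submodule.projectionOnto_apply_left hq ⟨log g, log_mem_lie hg⟩
  simpa [hlog, exp_log] using congrFun hF ⟨log g, log_mem_lie hg⟩

/-- A real-valued lift of a circle-valued fibre coordinate of period `a`. -/
structure IsFibreLift (Γ M N : Subgroup (UT n)) (R : Set (UT n)) (ζ : UT n) (a : ℝ)
    (W : UT n → ℝ) : Prop where
  continuous : Continuous W
  map_one : W 1 = 0
  map_lattice : ∀ γ ∈ Γ, W γ ∈ AddSubgroup.zmultiples a
  left_mul : ∀ r ∈ R, ∀ g ∈ M, W (r * g) = W g
  mul_mem : ∀ g ∈ M, ∀ x ∈ N, W (g * x) = W g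
  mul_lattice : ∀ g ∈ M, ∀ γ ∈ Γ, W (g * γ) = W g + W γ
  mul_rpow : ∀ g ∈ M, ∀ t : ℝ, W (g * ζ ^ t) = W g + t

/-- By unique lifting, the relations for the circle-valued coordinate hold for its lift. -/
theorem IsFibreCoordinate.exists_isFibreLift {w : UT n → AddCircle a}
    (hw : IsFibreCoordinate Γ M N R ζ w) (hM : IsRealAlgebraic M) (hN : IsRationalNormal Γ M N)
    (hζ : IsCentralStep Γ M N ζ) (hΓM : Γ ≤ M) (hRM : R ⊆ M) (hR : IsPreconnected R)
    (hR1 : 1 ∈ R) : ∃ W, IsFibreLift Γ M N R ζ a W := by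
  obtain ⟨W, hW, hW1, hWw⟩ := hM.exists_continuous_lift hw.continuousOn
  have hcov := AddCircle.isCoveringMap_coe a
  have hWΓ : ∀ γ ∈ Γ, (W γ : AddCircle a) = 0 := fun γ hγ => by
    rw [hWw γ (hΓM hγ), sub_eq_zero]
    simpa using hw.mul_lattice 1 (one_mem M) γ hγ
  refine ⟨W, hW, hW1, fun γ hγ => (QuotientAddGroup.eq_zero_iff _).1 (hWΓ γ hγ),
    fun r hr g hg => ?_, fun g hg x hx => ?_, fun g hg γ hγ => ?_, fun g hg t => ?_⟩
  · refine hcov.eqOn_of_comp_eqOn hR (g₁ := fun r => W (r * g)) (g₂ := fun _ => W g)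
      (by fun_prop) continuousOn_const (fun r hr => ?_) hR1 (by simp) hr
    simp only [Function.comp_apply, hWw _ hg, hWw _ (M.mul_mem (hRM hr) hg),
      hw.left_mul r hr g hg]
  · refine hcov.eqOn_of_comp_eqOn hN.isRealAlgebraic.isPreconnected (g₁ := fun x => W (g * x))
      (g₂ := fun _ => W g) (by fun_prop) continuousOn_const (fun x hx => ?_) (one_mem N)
      (by simp) hx
    simp only [Function.comp_apply, hWw _ hg, hWw _ (M.mul_mem hg (hN.le hx)),
      hw.mul_mem g hg x hx]
  · refine hcov.eqOn_of_comp_eqOn hM.isPreconnected (g₁ := fun g => W (g * γ))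
      (g₂ := fun g => W g + W γ) (by fun_prop) (by fun_prop) (fun g hg => ?_) (one_mem M)
      (by simp [hW1]) hg
    simp only [Function.comp_apply, AddCircle.coe_add, hWΓ γ hγ, add_zero, hWw _ hg,
      hWw _ (M.mul_mem hg (hΓM hγ)), hw.mul_lattice g hg γ hγ]
  · refine hcov.eqOn_of_comp_eqOn isPreconnected_univ (g₁ := fun t : ℝ => W (g * ζ ^ t))
      (g₂ := fun t => W g + t)
      (hW.comp (continuous_const.mul (continuous_rpow_const ζ))).continuousOn (by fun_prop)
      (fun t _ => ?_) (Set.mem_univ 0) (by simp) (Set.mem_univ t)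
    simp only [Function.comp_apply, AddCircle.coe_add, hWw _ hg,
      hWw _ (M.mul_mem hg (hζ.rpow_mem t)), hw.mul_rpow g hg t, sub_add_eq_add_sub]

theorem commutator_mem {g h : UT n} (hg : g ∈ M) (hh : h ∈ M) : ⁅g, h⁆ ∈ M :=
  mul_mem (mul_mem (mul_mem hg hh) (inv_mem hg)) (inv_mem hh)

namespace IsFibreLift

theorem map_mul_mul_sub_map_mul (hW : IsFibreLift Γ M N R ζ a W) (hN : IsRationalNormal Γ M N)
    (hζ : IsCentralStep Γ M N ζ) {h x g : UT n} (hh : h ∈ M) (hx : x ∈ M) (hg : g ∈ line ζ ⊔ N) :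
    W (h * (x * g)) - W (x * g) = W (h * x) - W x := by
  obtain ⟨t, ht⟩ := (mem_line_sup_iff (hζ.line_le.trans hN.le_normalizer)).1 hg
  have key : ∀ y ∈ M, W (y * g) = W y + t := fun y hy => by
    rw [← hW.mul_rpow y hy, ← hW.mul_mem _ (M.mul_mem hy (hζ.rpow_mem t)) _ ht, mul_assoc,
      mul_inv_cancel_left]
  rw [← mul_assoc, key _ (M.mul_mem hh hx), key x hx, add_sub_add_right_eq_sub]

theorem map_mul_mul_lattice_sub (hW : IsFibreLift Γ M N R ζ a W) {h x γ : UT n} (hh : h ∈ M)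
    (hx : x ∈ M) (hγ : γ ∈ Γ) : W (h * (x * γ)) - W (x * γ) = W (h * x) - W x := by
  rw [← mul_assoc, hW.mul_lattice _ (M.mul_mem hh hx) γ hγ, hW.mul_lattice x hx γ hγ,
    add_sub_add_right_eq_sub]

theorem exists_abs_map_mul_sub_le (hW : IsFibreLift Γ M N R ζ a W) (hMΓ : IsRational Γ M)
    {h : UT n} (hh : h ∈ M) : ∃ C, ∀ x ∈ M, |W (h * x) - W x| ≤ C := by
  obtain ⟨K, hK, hKM⟩ := hMΓ
  have hcont : Continuous fun x => W (h * x) - W x :=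
    (hW.continuous.comp (continuous_const_mul h)).sub hW.continuous
  obtain ⟨C, hC⟩ := hK.exists_bound_of_continuousOn hcont.continuousOn
  refine ⟨C, fun x hx => ?_⟩
  obtain ⟨k, hk, γ, hγ, hkγ : k * γ = x⟩ := hKM hx
  have hkM : k ∈ M := (mul_mem_cancel_right (show γ ∈ M from hγ.2)).1 (hkγ ▸ hx)
  rw [← hkγ, hW.map_mul_mul_lattice_sub hh hkM hγ.1]
  exact hC k hk

/-- The bounded function `x ↦ W (h * x) - W x` changes by the constant `W ⁅r⁻¹, h⁆` under left
multiplication by `r`, so that this constant vanishes. -/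
theorem map_mul_of_commutator (hW : IsFibreLift Γ M N R ζ a W) (hM : IsRealAlgebraic M)
    (hMΓ : IsRational Γ M) (hN : IsRationalNormal Γ M N) (hζ : IsCentralStep Γ M N ζ)
    (hΓM : Γ ≤ M) (hRM : R ⊆ M) (hmin : IsMinimalMod Γ M R (line ζ ⊔ N)) {h : UT n} (hh : h ∈ M)
    (hcomm : ∀ r ∈ R, ∀ x ∈ M, W (⁅r⁻¹, h⁆ * x) = W ⁅r⁻¹, h⁆ + W x) {x : UT n} (hx : x ∈ M) :
    W (h * x) = W h + W x := by
  have hshift : ∀ r ∈ R, ∀ x ∈ M,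
      W (h * (r * x)) - W (r * x) = W (h * x) - W x + W ⁅r⁻¹, h⁆ := fun r hr x hx => by
    have hswap : h * (r * x) = r * (⁅r⁻¹, h⁆ * (h * x)) := by
      rw [commutatorElement_def]; group
    rw [hswap, hW.left_mul r hr _
        (M.mul_mem (commutator_mem (inv_mem (hRM hr)) hh) (M.mul_mem hh hx)),
      hcomm r hr _ (M.mul_mem hh hx), hW.left_mul r hr x hx]
    ring
  obtain ⟨C, hC⟩ := hW.exists_abs_map_mul_sub_le hMΓ hh
  have hzero : ∀ r ∈ R, W ⁅r⁻¹, h⁆ = 0 := fun r hr => by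
    have hpow : ∀ k : ℕ, W (h * r ^ k) - W (r ^ k) = W h + k * W ⁅r⁻¹, h⁆ := fun k => by
      induction k with
      | zero => simp [hW.map_one]
      | succ k ih => rw [pow_succ', hshift r hr _ (pow_mem (hRM hr) k), ih]; push_cast; ring
    refine eq_zero_of_forall_abs_add_nat_mul_le (C := C) (c := W h) fun k => ?_
    exact hpow k ▸ hC _ (pow_mem (hRM hr) k)
  have hcont : Continuous fun x => W (h * x) - W x :=
    (hW.continuous.comp (continuous_const_mul h)).sub hW.continuous
  have hconst := hmin.eq_of_invariant hM hΓM (sup_le hζ.line_le hN.le) hRM hcont.continuousOn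
    (fun r hr x hx => by rw [hshift r hr x hx, hzero r hr, add_zero])
    (fun x hx g hg => hW.map_mul_mul_sub_map_mul hN hζ hh hx hg)
    (fun x hx γ hγ => hW.map_mul_mul_lattice_sub hh hx hγ) x hx
  simpa [hW.map_one, sub_eq_iff_eq_add] using hconst

/-- Descending induction on the depth of `h` in the superdiagonal filtration. -/
theorem map_mul (hW : IsFibreLift Γ M N R ζ a W) (hM : IsRealAlgebraic M) (hMΓ : IsRational Γ M)
    (hN : IsRationalNormal Γ M N) (hζ : IsCentralStep Γ M N ζ) (hΓM : Γ ≤ M) (hRM : R ⊆ M)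
    (hmin : IsMinimalMod Γ M R (line ζ ⊔ N)) {h x : UT n} (hh : h ∈ M) (hx : x ∈ M) :
    W (h * x) = W h + W x := by
  suffices H : ∀ k j, n ≤ j + k → ∀ h ∈ M, toMatrix h - 1 ∈ superdiag ℝ n j →
      ∀ x ∈ M, W (h * x) = W h + W x from
    H n 1 (by omega) h hh (toMatrix_sub_one_mem h) x hx
  intro k
  induction k with
  | zero =>
    intro j hj h _ hdepth x _
    obtain rfl : h = 1 := toMatrix_injective <| by
      rw [_root_.map_one, sub_eq_zero.1 (superdiag.eq_zero hdepth hj)]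
    rw [one_mul, hW.map_one, zero_add]
  | succ k ih =>
    intro j hj h hh hdepth x hx
    refine hW.map_mul_of_commutator hM hMΓ hN hζ hΓM hRM hmin hh (fun r hr => ?_) hx
    exact ih (j + 1) (by omega) _ (commutator_mem (inv_mem (hRM hr)) hh)
      (toMatrix_commutator_sub_one_mem _ hdepth)

end IsFibreLift

/-! ### Kernels of rational characters and the minimality criterion -/

theorem map_rpow_of_map_mul (hM : IsRealAlgebraic M) (hW : Continuous W)
    (hmul : ∀ g ∈ M, ∀ h ∈ M, W (g * h) = W g + W h) {g : UT n} (hg : g ∈ M) (t : ℝ) :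
    W (g ^ t) = t * W g := by
  let φ : ℝ →+ ℝ := AddMonoidHom.mk' (fun t => W (g ^ t)) fun s t => by
    rw [rpow_add, hmul _ (hM.rpow_mem g hg s) _ (hM.rpow_mem g hg t)]
  have hlin := map_real_smul φ (hW.comp (continuous_rpow_const g)) t 1
  simpa [φ, rpow_one] using hlin

theorem isRational_ker (hMΓ : IsRational Γ M) (ha : a ≠ 0) (hW : Continuous W)
    (hmul : ∀ g ∈ M, ∀ h ∈ M, W (g * h) = W g + W h)
    (hWΓ : ∀ γ ∈ Γ, W γ ∈ AddSubgroup.zmultiples a) {L : Subgroup (UT n)}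
    (hL : ∀ g, g ∈ L ↔ g ∈ M ∧ W g = 0) : IsRational Γ L := by
  obtain ⟨K, hK, hKM⟩ := hMΓ
  obtain ⟨C, hC⟩ := hK.exists_bound_of_continuousOn hW.continuousOn
  set S : Set (UT n) := {γ | γ ∈ Γ ⊓ M ∧ W γ ∈ Metric.closedBall (0 : ℝ) C}
  have hfinite : (W '' S).Finite := by
    have hpre := (Int.tendsto_zmultiplesHom_cofinite ha).eventually
      (isCompact_closedBall (0 : ℝ) C).compl_mem_cocompact
    refine (Set.Finite.image (zmultiplesHom ℝ a) hpre).subset ?_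
    rintro _ ⟨γ, hγ, rfl⟩
    obtain ⟨k, hk⟩ := hWΓ γ hγ.1.1
    exact ⟨k, by simpa [← hk] using hγ.2, hk⟩
  obtain ⟨T, hTS, hT⟩ := S.exists_subset_bijOn W
  refine ⟨K * T, hK.mul (hT.finite_iff_finite.2 hfinite).isCompact, fun g hg => ?_⟩
  obtain ⟨hgM, hg0⟩ := (hL g).1 hg
  obtain ⟨k, hk, γ, hγ, hkγ : k * γ = g⟩ := hKM hgM
  have hkM : k ∈ M := (mul_mem_cancel_right (show γ ∈ M from hγ.2)).1 (hkγ ▸ hgM)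
  have hWγ : W γ = -W k := by
    rw [eq_neg_iff_add_eq_zero, add_comm, ← hmul k hkM γ hγ.2, hkγ, hg0]
  obtain ⟨τ, hτ, hτγ⟩ := hT.surjOn ⟨γ, ⟨hγ, by simpa [hWγ] using hC k hk⟩, rfl⟩
  have hτΓ : τ ∈ Γ := (hTS hτ).1.1
  have hτM : τ ∈ M := (hTS hτ).1.2
  refine Set.mem_mul.2 ⟨k * τ, Set.mul_mem_mul hk hτ, τ⁻¹ * γ,
    ⟨Γ.mul_mem (inv_mem hτΓ) hγ.1, (hL _).2 ⟨M.mul_mem (inv_mem hτM) hγ.2, ?_⟩⟩, ?_⟩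
  · have hsum := hmul τ hτM (τ⁻¹ * γ) (M.mul_mem (inv_mem hτM) hγ.2)
    rw [mul_inv_cancel_left] at hsum
    linarith
  · rw [mul_assoc, mul_inv_cancel_left, hkγ]

theorem exists_isRationalNormal_ker (hM : IsRealAlgebraic M) (hMΓ : IsRational Γ M)
    (ha : a ≠ 0) (hW : Continuous W) (hmul : ∀ g ∈ M, ∀ h ∈ M, W (g * h) = W g + W h)
    (hWΓ : ∀ γ ∈ Γ, W γ ∈ AddSubgroup.zmultiples a) :
    ∃ L, IsRationalNormal Γ M L ∧ ∀ g, g ∈ L ↔ g ∈ M ∧ W g = 0 := by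
  have hone : W 1 = 0 := by simpa using hmul 1 (one_mem M) 1 (one_mem M)
  have hinv : ∀ g ∈ M, W g⁻¹ = -W g := fun g hg => by
    rw [eq_neg_iff_add_eq_zero, ← hmul _ (inv_mem hg) g hg, inv_mul_cancel, hone]
  let L : Subgroup (UT n) :=
    { carrier := {g | g ∈ M ∧ W g = 0}
      one_mem' := ⟨one_mem M, hone⟩
      mul_mem' := fun hg hh => ⟨mul_mem hg.1 hh.1, by rw [hmul _ hg.1 _ hh.1, hg.2, hh.2, add_zero]⟩
      inv_mem' := fun hg => ⟨inv_mem hg.1, by rw [hinv _ hg.1, hg.2, neg_zero]⟩ }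
  have hL : ∀ g, g ∈ L ↔ g ∈ M ∧ W g = 0 := fun _ => Iff.rfl
  refine ⟨L, ⟨⟨hM.isClosed.inter (isClosed_singleton.preimage hW), fun g hg t =>
      ⟨hM.rpow_mem g hg.1 t, ?_⟩⟩, ?_, fun g hg => hg.1,
    Subgroup.le_normalizer_iff.2 fun m hm g hg => ⟨mul_mem (mul_mem hm hg.1) (inv_mem hm), ?_⟩⟩, hL⟩
  · rw [map_rpow_of_map_mul hM hW hmul hg.1, hg.2, mul_zero]
  · exact isRational_ker hMΓ ha hW hmul hWΓ hL
  · rw [hmul _ (mul_mem hm hg.1) _ (inv_mem hm), hmul m hm g hg.1, hg.2, hinv m hm]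
    ring

/-- If the induction step fails, the lift of the resulting fibre coordinate is a character of `M`
whose kernel contains `N` and `R` but not `ζ`. -/
theorem IsMinimalMod.of_line_sup (hmin : IsMinimalMod Γ M R (line ζ ⊔ N)) (hM : IsRealAlgebraic M)
    (hMΓ : IsRational Γ M) (hN : IsRationalNormal Γ M N) (hζ : IsCentralStep Γ M N ζ)
    (hΓM : Γ ≤ M) (hRM : R ⊆ M) (hR : IsPreconnected R) (hR1 : 1 ∈ R)
    (hfull : ∀ L, IsRationalNormal Γ M L → N ≤ L → R ⊆ L → L = M) : IsMinimalMod Γ M R N := by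
  intro Y hY
  by_contra hMY
  obtain ⟨Z, hZY, hZ⟩ := hY.exists_minimal_subset hMΓ
  obtain ⟨a, w, ha, hw⟩ := exists_isFibreCoordinate hZ hN hζ hΓM hRM hmin
    fun h => hMY (h.trans hZY)
  obtain ⟨W, hW⟩ := hw.exists_isFibreLift hM hN hζ hΓM hRM hR hR1
  obtain ⟨L, hL, hmem⟩ := exists_isRationalNormal_ker hM hMΓ ha hW.continuous
    (fun g hg h hh => hW.map_mul hM hMΓ hN hζ hΓM hRM hmin hg hh) hW.map_lattice
  have hNL : N ≤ L := fun x hx =>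
    (hmem x).2 ⟨hN.le hx, by simpa [hW.map_one] using hW.mul_mem 1 (one_mem M) x hx⟩
  have hRL : R ⊆ L := fun r hr =>
    (hmem r).2 ⟨hRM hr, by simpa [hW.map_one] using hW.left_mul r hr 1 (one_mem M)⟩
  have hζL : ζ ∈ L := hfull L hL hNL hRL ▸ hΓM hζ.mem_lattice
  have hWζ : W ζ = 1 := by simpa [hW.map_one, rpow_one] using hW.mul_rpow 1 (one_mem M) 1
  exact one_ne_zero (hWζ.symm.trans ((hmem ζ).1 hζL).2)

theorem isMinimalMod_of_forall_eq {M' : Subgroup (UT n)} (hM : IsRealAlgebraic M)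
    (hMΓ : IsRational Γ M) (hM' : IsRationalNormal Γ M M') (hΓM : Γ ≤ M) (hRM : R ⊆ M)
    (hR : IsPreconnected R) (hR1 : 1 ∈ R)
    (hfull : ∀ L, IsRationalNormal Γ M L → M' ≤ L → R ⊆ L → L = M) : IsMinimalMod Γ M R M' := by
  suffices H : ∀ k N, IsRationalNormal Γ M N → M' ≤ N →
      Module.finrank ℝ (lie M) ≤ Module.finrank ℝ (lie N) + k → IsMinimalMod Γ M R N from
    H _ M' hM' le_rfl le_add_self
  intro k
  induction k with
  | zero =>
    intro N hN _ hrank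
    obtain rfl : N = M := hN.isRealAlgebraic.eq_of_finrank_lie_le hN.le hrank
    exact isMinimalMod_self
  | succ k ih =>
    intro N hN hM'N hrank
    by_cases hNM : N = M
    · exact hNM ▸ isMinimalMod_self
    obtain ⟨ζ, hζ⟩ := hN.exists_isCentralStep hΓM hM hMΓ hNM
    have hline := hζ.isRationalNormal_line_sup hN
    have hlt := hN.isRealAlgebraic.finrank_lie_lt hζ.lt_line_sup
    exact (ih _ hline (hM'N.trans le_sup_right) (by omega)).of_line_sup hM hMΓ hN hζ hΓM hRM hR hR1
      fun L hL hNL => hfull L hL (hM'N.trans hNL)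

end UT

/-! ### Scaling limits of polynomial maps -/

section ScalingLimit

variable {V : Type*} [AddCommGroup V] [Module ℝ V]

theorem exists_finsupp_eq_sum_of_mem_polyFun [FiniteDimensional ℝ V] {E : ℝ → ℝ → V}
    (hE : ∀ l : V →ₗ[ℝ] ℝ, (fun x => l (E (x 0) (x 1))) ∈ affinePoly 2) :
    ∃ P : (Fin 2 →₀ ℕ) →₀ V, ∀ t s, E t s = P.sum fun d v => (t ^ d 0 * s ^ d 1) • v := by
  let b := Module.finBasis ℝ V
  choose p hp using fun k => mem_polyFun_iff.1 (hE (b.coord k))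
  refine ⟨∑ k, ∑ d ∈ (p k).support, Finsupp.single d ((p k).coeff d • b k), fun t s => ?_⟩
  have hcoord : ∀ k, b.repr (E t s) k =
      ∑ d ∈ (p k).support, (t ^ d 0 * s ^ d 1) * (p k).coeff d := fun k => by
    simpa [MvPolynomial.eval_eq', mul_comm] using hp k ![t, s]
  simp only [← Finsupp.sum_finsetSum_index (fun _ => smul_zero _) fun _ _ _ => smul_add _ _ _,
    Finsupp.sum_single_index, smul_zero]
  rw [← b.sum_repr (E t s)]
  simp only [hcoord, Finset.sum_smul, smul_smul]

theorem exists_forall_mul_le_mul {D : Finset (Fin 2 →₀ ℕ)} (hD : D.Nonempty)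
    (hpos : ∀ d ∈ D, 0 < d 1) :
    ∃ a b : ℕ, 0 < b ∧ (∀ d ∈ D, b * d 0 ≤ a * d 1) ∧ ∃ d ∈ D, b * d 0 = a * d 1 := by
  obtain ⟨e, he, hmax⟩ := D.exists_max_image (fun d => (d 0 : ℚ) / d 1) hD
  refine ⟨e 0, e 1, hpos e he, fun d hd => ?_, e, he, mul_comm _ _⟩
  have hslope := hmax d hd
  rw [div_le_div_iff₀ (by exact_mod_cast hpos d hd) (by exact_mod_cast hpos e he)] at hslope
  rw [mul_comm]
  exact_mod_cast hslope

theorem exists_sum_pow_smul_ne_zero {ι : Type*} {D : Finset ι} {e : ι → ℕ}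
    (he : Set.InjOn e D) {c : ι → V} {i : ι} (hi : i ∈ D) (hci : c i ≠ 0) :
    ∃ u : ℝ, ∑ j ∈ D, u ^ e j • c j ≠ 0 := by
  by_contra! h
  refine hci ((Module.forall_dual_apply_eq_zero_iff ℝ (c i)).1 fun l => ?_)
  let p : Polynomial ℝ := ∑ j ∈ D, Polynomial.monomial (e j) (l (c j))
  have hp : p = 0 := Polynomial.funext fun u => by
    simpa [p, Polynomial.eval_finsetSum, mul_comm] using congrArg l (h u)
  have hcoeff : p.coeff (e i) = l (c i) := by
    simp only [p, Polynomial.finsetSum_coeff, Polynomial.coeff_monomial]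
    exact (Finset.sum_eq_single_of_mem i hi fun j hj hji =>
      if_neg fun hji' => hji (he hj hi hji')).trans (if_pos rfl)
  rw [← hcoeff, hp, Polynomial.coeff_zero]

theorem tendsto_pow_pow_mul_div_pow_pow {a b i j : ℕ} (hij : b * i ≤ a * j) (u : ℝ) :
    Tendsto (fun τ : ℝ => (τ ^ b) ^ i * (u / τ ^ a) ^ j) atTop
      (nhds (if b * i = a * j then u ^ j else 0)) := by
  have hpow : ∀ τ : ℝ, (τ ^ b) ^ i * (u / τ ^ a) ^ j = u ^ j * (τ ^ (b * i) / τ ^ (a * j)) :=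
    fun τ => by rw [div_pow, ← pow_mul, ← pow_mul]; ring
  simp only [hpow]
  split_ifs with h
  · refine tendsto_const_nhds.congr' ?_
    filter_upwards [eventually_gt_atTop 0] with τ hτ
    rw [h, div_self (by positivity), mul_one]
  · simpa using (tendsto_pow_div_pow_atTop_zero (𝕜 := ℝ) (hij.lt_of_ne h)).const_mul (u ^ j)

theorem tendsto_add_div_rpow_pow {a b : ℕ} (hb : 0 < b) (u : ℝ) :
    Tendsto (fun τ : ℝ => τ ^ b + u / τ ^ a) atTop atTop := by
  rcases Nat.eq_zero_or_pos a with rfl | ha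
  · simpa using tendsto_atTop_add_const_right _ u (tendsto_pow_atTop hb.ne')
  · exact (tendsto_pow_atTop hb.ne').atTop_add
      ((tendsto_const_nhds (x := u)).div_atTop (tendsto_pow_atTop ha.ne'))

variable [TopologicalSpace V] [IsTopologicalAddGroup V] [ContinuousSMul ℝ V]

/-- The Newton polygon: with `a / b` the largest slope `i / j` among the monomials `t ^ i * s ^ j`
of `E`, only the monomials of slope `a / b` survive in `E (τ ^ b) (u / τ ^ a)` as `τ → ∞`. -/
theorem exists_tendsto_sum_pow_mul_pow {P : (Fin 2 →₀ ℕ) →₀ V} (hP : P ≠ 0)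
    (hpos : ∀ d ∈ P.support, 0 < d 1) :
    ∃ (a b : ℕ) (q : ℝ → V), 0 < b ∧ Continuous q ∧ q 0 = 0 ∧ (∃ u, q u ≠ 0) ∧
      ∀ u, Tendsto (fun τ : ℝ => P.sum fun d v => ((τ ^ b) ^ d 0 * (u / τ ^ a) ^ d 1) • v) atTop
        (nhds (q u)) := by
  obtain ⟨a, b, hb, hle, e, he, hslope⟩ :=
    exists_forall_mul_le_mul (Finsupp.support_nonempty_iff.2 hP) hpos
  let D := P.support.filter fun d => b * d 0 = a * d 1
  have hinj : Set.InjOn (fun d : Fin 2 →₀ ℕ => d 1) D := fun d hd d' hd' h => by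
    have hd := (Finset.mem_filter.1 hd).2
    have hd' := (Finset.mem_filter.1 hd').2
    have h0 : d 0 = d' 0 := Nat.eq_of_mul_eq_mul_left hb (by rw [hd, hd', show d 1 = d' 1 from h])
    exact Finsupp.ext (Fin.forall_fin_two.2 ⟨h0, h⟩)
  refine ⟨a, b, fun u => ∑ d ∈ D, u ^ d 1 • P d, hb, by fun_prop,
    Finset.sum_eq_zero fun d hd => ?_, exists_sum_pow_smul_ne_zero hinj
      (Finset.mem_filter.2 ⟨he, hslope⟩) (Finsupp.mem_support_iff.1 he), fun u => ?_⟩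
  · rw [zero_pow (hpos d (Finset.mem_filter.1 hd).1).ne', zero_smul]
  · simp only [D, Finset.sum_filter, ← ite_zero_smul]
    exact tendsto_finsetSum _ fun d hd =>
      (tendsto_pow_pow_mul_div_pow_pow (hle d hd) u).smul_const _

theorem exists_tendsto_of_mem_polyFun [FiniteDimensional ℝ V] {E : ℝ → ℝ → V}
    (hE : ∀ l : V →ₗ[ℝ] ℝ, (fun x => l (E (x 0) (x 1))) ∈ affinePoly 2)
    (hE0 : ∀ t, E t 0 = 0) (hne : ∃ t s, E t s ≠ 0) :
    ∃ q : ℝ → V, Continuous q ∧ q 0 = 0 ∧ (∃ u, q u ≠ 0) ∧ ∀ u, ∃ σ : ℝ → ℝ,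
      Tendsto σ atTop atTop ∧ Tendsto (fun t => E t (σ t - t)) atTop (nhds (q u)) := by
  obtain ⟨P, hP⟩ := exists_finsupp_eq_sum_of_mem_polyFun hE
  have hP' : ∀ t s, E t s = (P.filter fun d => 0 < d 1).sum
      fun d v => (t ^ d 0 * s ^ d 1) • v := fun t s => by
    rw [← sub_zero (E t s), ← hE0 t, hP, hP, Finsupp.sum_filter_index, Finsupp.support_filter,
      Finset.sum_filter, Finsupp.sum, Finsupp.sum, ← Finset.sum_sub_distrib]
    refine Finset.sum_congr rfl fun d _ => ?_
    split_ifs with hd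
    · simp [hd.ne']
    · simp [Nat.eq_zero_of_not_pos hd]
  have hP0 : (P.filter fun d => 0 < d 1) ≠ 0 := fun h => by
    obtain ⟨t, s, hts⟩ := hne
    exact hts (by rw [hP', h, Finsupp.sum_zero_index])
  obtain ⟨a, b, q, hb, hq, hq0, hqne, hlim⟩ := exists_tendsto_sum_pow_mul_pow hP0
    fun d hd => (Finset.mem_filter.1 hd).2
  simp only [← hP'] at hlim
  have hroot : Tendsto (fun t : ℝ => t ^ (b : ℝ)⁻¹) atTop atTop :=
    tendsto_rpow_atTop (by positivity)
  refine ⟨q, hq, hq0, hqne, fun u => ⟨_, (tendsto_add_div_rpow_pow (a := a) hb u).comp hroot,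
    ((hlim u).comp hroot).congr' ?_⟩⟩
  filter_upwards [eventually_ge_atTop 0] with t ht
  simp only [Function.comp_apply, Real.rpow_inv_natCast_pow ht hb.ne', add_sub_cancel_left]

end ScalingLimit

namespace UT

variable {n : ℕ} {G P : Subgroup (UT n)} {F : ℝ → UT n}

/-- `a` is an asymptotic shift of the curve `F` modulo `P` if `F (σ t) ∈ a_t P F(t)` for some
`σ t → ∞` and `a_t → a`. Left multiplication by such an element preserves the limit set of the
orbit of `F`. -/
def IsAsymptoticShift (P : Subgroup (UT n)) (F : ℝ → UT n) (a : UT n) : Prop :=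
  ∃ (σ : ℝ → ℝ) (ψ : ℝ → UT n), Tendsto σ atTop atTop ∧ Tendsto ψ atTop (nhds a) ∧
    ∀ t, (ψ t)⁻¹ * (F (σ t) * (F t)⁻¹) ∈ P

theorem exists_isAsymptoticShift (hF : IsPolyMap linePoly F) (hG : IsRealAlgebraic G)
    (hP : IsRealAlgebraic P) (hPG : P ≤ G) (hGP : G ≤ Subgroup.normalizer (P : Set (UT n)))
    (hFG : ∀ t, F t ∈ G) (hF0 : F 0 = 1) (hFP : ∃ t, F t ∉ P) :
    ∃ r : ℝ → UT n, Continuous r ∧ r 0 = 1 ∧ (∀ u, r u ∈ G) ∧ (∃ u, r u ∉ P) ∧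
      ∀ u, IsAsymptoticShift P F (r u) := by
  obtain ⟨W, hW⟩ := Submodule.exists_isCompl (lie P)
  let π := W.projection (lie P) hW.symm
  have hπ : ∀ X, X - π X ∈ lie P := Submodule.sub_projection_mem hW.symm
  let E : ℝ → ℝ → StrictUpper n := fun t s => π (log (F (t + s) * (F t)⁻¹))
  have hquot : ∀ t s, F (t + s) * (F t)⁻¹ ∈ G := fun t s => mul_mem (hFG _) (inv_mem (hFG t))
  have hEmem : ∀ t s, E t s ∈ W ⊓ lie G := fun t s =>
    Submodule.mem_inf.2 ⟨Submodule.projection_apply_mem _ _, by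
      simpa only [sub_sub_cancel] using
        sub_mem (log_mem_lie (hquot t s)) (lie_mono hPG (hπ (log (F (t + s) * (F t)⁻¹))))⟩
  have hFadd : IsPolyMap (affinePoly 2) fun x => F (x 0 + x 1) :=
    hF.comp fun _ => add_mem (coord_mem_polyFun _ 0) (coord_mem_polyFun _ 1)
  have hFfst : IsPolyMap (affinePoly 2) fun x => F (x 0) := hF.comp fun _ => coord_mem_polyFun _ 0
  have hE : ∀ l : StrictUpper n →ₗ[ℝ] ℝ, (fun x => l (E (x 0) (x 1))) ∈ affinePoly 2 :=
    fun l => (hFadd.mul hFfst.inv).linear_log_mem (l ∘ₗ π)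
  have hne : ∃ t s, E t s ≠ 0 := by
    obtain ⟨t, ht⟩ := hFP
    refine ⟨0, t, fun h => ht (hP.log_mem_lie_iff.1 ?_)⟩
    have hlog := hπ (log (F (0 + t) * (F 0)⁻¹))
    rwa [show π _ = 0 from h, sub_zero, zero_add, hF0, inv_one, mul_one] at hlog
  obtain ⟨q, hq, hq0, ⟨u₀, hu₀⟩, hlim⟩ :=
    exists_tendsto_of_mem_polyFun hE (fun t => by simp [E, log_one]) hne
  have hqmem : ∀ u, q u ∈ W ⊓ lie G := fun u => by
    obtain ⟨σ, -, hσ⟩ := hlim u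
    exact (Submodule.closed_of_finiteDimensional (W ⊓ lie G)).mem_of_tendsto hσ
      (.of_forall fun t => hEmem _ _)
  refine ⟨fun u => exp (q u), continuous_exp.comp hq, by simp [hq0, exp_zero],
    fun u => hG.mem_lie_iff.1 (hqmem u).2, ⟨u₀, fun h => hu₀ ?_⟩, fun u => ?_⟩
  · exact Submodule.disjoint_def.1 hW.disjoint _ (hP.mem_lie_iff.2 h) (hqmem u₀).1
  · obtain ⟨σ, hσ, hEσ⟩ := hlim u
    refine ⟨σ, fun t => exp (E t (σ t - t)), hσ, (continuous_exp.tendsto _).comp hEσ, fun t => ?_⟩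
    rw [hP.inv_mul_mem_iff (hGP (hG.mem_lie_iff.1 (hEmem _ _).2)), log_exp]
    simpa [E] using hπ (log (F (t + (σ t - t)) * (F t)⁻¹))

end UT

/-! ### Limit sets of polynomial curves -/

/-- A closed set contains the arc near every interior point of it, hence it has no interior once
all arcs meeting it infinitely often force it to be everything. -/
theorem dense_setOf_forall_notMem {T ι : Type*} [TopologicalSpace T] [BaireSpace T] {I : Set ι}
    (hI : I.Countable) {B : ι → Set T} (hcl : ∀ i ∈ I, IsClosed (B i))
    (harc : ∀ i ∈ I, ∀ x y, ∃ γ : ℝ → T, Continuous γ ∧ γ 0 = x ∧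
      ({t | γ t ∈ B i}.Infinite → y ∈ B i))
    (hne : ∀ i ∈ I, ∃ y, y ∉ B i) : Dense {x | ∀ i ∈ I, x ∉ B i} := by
  have hdense : ∀ i ∈ I, Dense (B i)ᶜ := fun i hi => by
    refine interior_eq_empty_iff_dense_compl.1 (Set.eq_empty_of_forall_notMem fun x hx => ?_)
    obtain ⟨y, hy⟩ := hne i hi
    obtain ⟨γ, hγ, hγ0, hγB⟩ := harc i hi x y
    exact hy (hγB (infinite_of_mem_nhds 0 (hγ.continuousAt.preimage_mem_nhds
      (hγ0.symm ▸ mem_interior_iff_mem_nhds.1 hx))))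
  exact (dense_biInter_of_isOpen (fun i hi => (hcl i hi).isOpen_compl) hI hdense).mono
    fun x hx i hi => Set.mem_iInter₂.1 hx i hi

namespace UT

variable {n : ℕ} {Γ G M P : Subgroup (UT n)} {F : ℝ → UT n}

/-- The part of the orbit `F(ℝ) P Γ` traced after time `k`. -/
def orbitTail (Γ P : Subgroup (UT n)) (F : ℝ → UT n) (k : ℝ) : Set (UT n) :=
  {x | ∃ t ≥ k, ∃ p ∈ P, ∃ γ ∈ Γ, F t * p * γ = x}

/-- The set of limits of the orbit `F(t) P Γ` as `t → ∞`. -/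
def limitSet (Γ P : Subgroup (UT n)) (F : ℝ → UT n) : Set (UT n) :=
  ⋂ k : ℝ, closure (orbitTail Γ P F k)

theorem orbitTail_antitone : Antitone (orbitTail Γ P F) :=
  fun _ _ hk _ ⟨t, ht, h⟩ => ⟨t, hk.trans ht, h⟩

theorem isClosed_limitSet : IsClosed (limitSet Γ P F) :=
  isClosed_iInter fun _ => isClosed_closure

theorem mul_lattice_mem_limitSet {y γ : UT n} (hy : y ∈ limitSet Γ P F) (hγ : γ ∈ Γ) :
    y * γ ∈ limitSet Γ P F := by
  refine Set.mem_iInter.2 fun k => map_mem_closure (f := fun x => x * γ)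
    (continuous_mul_const γ) (Set.mem_iInter.1 hy k) ?_
  rintro _ ⟨t, ht, p, hp, δ, hδ, rfl⟩
  exact ⟨t, ht, p, hp, δ * γ, mul_mem hδ hγ, by group⟩

theorem mul_mem_limitSet (hΓP : Γ ≤ Subgroup.normalizer (P : Set (UT n))) {y q : UT n}
    (hy : y ∈ limitSet Γ P F) (hq : q ∈ P) : y * q ∈ limitSet Γ P F := by
  refine Set.mem_iInter.2 fun k => map_mem_closure (f := fun x => x * q)
    (continuous_mul_const q) (Set.mem_iInter.1 hy k) ?_
  rintro _ ⟨t, ht, p, hp, γ, hγ, rfl⟩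
  exact ⟨t, ht, p * (γ * q * γ⁻¹), mul_mem hp (Subgroup.le_normalizer_iff.1 hΓP γ hγ q hq), γ, hγ,
    by group⟩

theorem IsAsymptoticShift.mul_mem_limitSet {a : UT n} (ha : IsAsymptoticShift P F a)
    (hF : ∀ t, F t ∈ Subgroup.normalizer (P : Set (UT n))) {y : UT n} (hy : y ∈ limitSet Γ P F) :
    a * y ∈ limitSet Γ P F := by
  obtain ⟨σ, ψ, hσ, hψ, hψP⟩ := ha
  refine Set.mem_iInter.2 fun k => mem_closure_iff_nhds.2 fun W hW => ?_
  have hmul : Tendsto (fun x : UT n × UT n => x.1 * x.2) (nhds a ×ˢ nhds y) (nhds (a * y)) := by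
    rw [← nhds_prod_eq]
    exact tendsto_mul
  obtain ⟨A, hA, V, hV, hAV⟩ := Filter.mem_prod_iff.1 (hmul hW)
  obtain ⟨k', hk'⟩ := eventually_atTop.1 ((hψ.eventually_mem hA).and (hσ.eventually_ge_atTop k))
  obtain ⟨_, hxV, t, ht, p, hp, γ, hγ, rfl⟩ :=
    mem_closure_iff_nhds.1 (Set.mem_iInter.1 hy k') V hV
  obtain ⟨hψA, hσk⟩ := hk' t ht
  have hconj : (F t)⁻¹ * ((ψ t)⁻¹ * (F (σ t) * (F t)⁻¹))⁻¹ * F t ∈ P :=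
    (Subgroup.mem_normalizer_iff''.1 (hF t) _).1 (inv_mem (hψP t))
  exact ⟨ψ t * (F t * p * γ), hAV (Set.mk_mem_prod hψA hxV), σ t, hσk, _, mul_mem hconj hp, γ, hγ,
    by group⟩

theorem exists_mul_mem_limitSet (hM : IsRealAlgebraic M) (hMΓ : IsRational Γ M)
    (hΓM : Γ ≤ Subgroup.normalizer (M : Set (UT n))) {g : UT n} (hg : g ∈ limitSet Γ M F) :
    ∃ m ∈ M, g * m ∈ limitSet Γ P F := by
  obtain ⟨K, hKsub, hK, hKM⟩ := hMΓ.exists_isCompact_subset hM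
  have htail : ∀ k, orbitTail Γ M F k ⊆ closure (orbitTail Γ P F k) * K⁻¹ := by
    rintro k _ ⟨t, ht, m, hm, γ, hγ, rfl⟩
    have hm' : (γ⁻¹ * m * γ)⁻¹ ∈ M :=
      inv_mem ((Subgroup.mem_normalizer_iff''.1 (hΓM hγ) m).1 hm)
    obtain ⟨κ, hκ, δ, hδ, hκδ : κ * δ = _⟩ := hKM hm'
    refine ⟨F t * 1 * (γ * δ⁻¹), subset_closure
      ⟨t, ht, 1, one_mem P, _, mul_mem hγ (inv_mem hδ.1), rfl⟩, κ⁻¹, Set.inv_mem_inv.2 hκ, ?_⟩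
    calc F t * 1 * (γ * δ⁻¹) * κ⁻¹ = F t * γ * (κ * δ)⁻¹ := by group
      _ = F t * m * γ := by rw [hκδ]; group
  let C : ℕ → Set (UT n) := fun k => K ∩ {x | g * x ∈ closure (orbitTail Γ P F k)}
  have hclosed : ∀ k : ℕ, IsClosed {x | g * x ∈ closure (orbitTail Γ P F k)} := fun _ =>
    isClosed_closure.preimage (continuous_const_mul g)
  have hne : ∀ k, (C k).Nonempty := fun k => by
    obtain ⟨y, hy, x, hx, hyx : y * x = g⟩ := closure_minimal (htail k)
      (isClosed_closure.mul_right_of_isCompact hK.inv) (Set.mem_iInter.1 hg k)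
    exact ⟨x⁻¹, hx, by simpa [← hyx] using hy⟩
  obtain ⟨m, hm⟩ := IsCompact.nonempty_iInter_of_sequence_nonempty_isCompact_isClosed C
    (fun k => Set.inter_subset_inter_right _ fun x hx =>
      closure_mono (orbitTail_antitone (by exact_mod_cast k.le_succ)) hx)
    hne (hK.inter_right (hclosed 0)) (fun k => hK.isClosed.inter (hclosed k))
  rw [Set.mem_iInter] at hm
  refine ⟨m, hKsub (hm 0).1, Set.mem_iInter.2 fun k => ?_⟩
  obtain ⟨N, hN⟩ := exists_nat_ge k
  exact closure_mono (orbitTail_antitone hN) (hm N).2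

theorem IsRealAlgebraic.subset_closure_setOf_notMem (hG : IsRealAlgebraic G) {ι : Type*}
    {I : Set ι} (hI : I.Countable) {B : ι → Set (UT n)} (hcl : ∀ i ∈ I, IsClosed (B i))
    (hline : ∀ i ∈ I, ∀ x ∈ G, ∀ y ∈ G, {t : ℝ | x * (x⁻¹ * y) ^ t ∈ B i}.Infinite → y ∈ B i)
    (hne : ∀ i ∈ I, ¬ (G : Set (UT n)) ⊆ B i) :
    (G : Set (UT n)) ⊆ closure {g | g ∈ G ∧ ∀ i ∈ I, g ∉ B i} := by
  have : LocallyCompactSpace G := hG.isClosed.isClosedEmbedding_subtypeVal.locallyCompactSpace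
  have hdense : Dense {x : G | ∀ i ∈ I, x ∉ Subtype.val ⁻¹' B i} :=
    dense_setOf_forall_notMem hI (fun i hi => (hcl i hi).preimage continuous_subtype_val)
      (fun i hi x y => ⟨fun t => ⟨x * (x⁻¹ * y) ^ t,
          mul_mem x.2 (hG.rpow_mem _ (mul_mem (inv_mem x.2) y.2) t)⟩,
        (continuous_const.mul (continuous_rpow_const _)).subtype_mk _,
        Subtype.ext (by simp [rpow_zero]), hline i hi x x.2 y y.2⟩)
      (fun i hi => by
        obtain ⟨g, hg, hgB⟩ := Set.not_subset.1 (hne i hi)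
        exact ⟨⟨g, hg⟩, hgB⟩)
  refine (Subtype.dense_iff.1 hdense).trans (closure_mono ?_)
  rintro _ ⟨g, hg, rfl⟩
  exact ⟨g.2, hg⟩

theorem mul_mem_limitSet_of_forall_eq (hM : IsRationalNormal Γ G M) (hP : IsRationalNormal Γ G P)
    (hPM : P ≤ M) (hΓG : Γ ≤ G) (hFG : ∀ t, F t ∈ G) {r : ℝ → UT n} (hr : Continuous r)
    (hr0 : r 0 = 1) (hrF : ∀ u, IsAsymptoticShift P F (r u)) {y : UT n}
    (hrM : ∀ u, y⁻¹ * r u * y ∈ M) (hy : y ∈ limitSet Γ P F)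
    (hfull : ∀ L, IsRationalNormal Γ M L → P ≤ L → (∀ u, y⁻¹ * r u * y ∈ L) → L = M)
    {m : UT n} (hm : m ∈ M) : y * m ∈ limitSet Γ P F := by
  have hrat : ∀ {L}, L ≤ M → (IsRational (Γ ⊓ M) L ↔ IsRational Γ L) := isRational_inf_iff
  refine (isMinimalMod_of_forall_eq (Γ := Γ ⊓ M) (M' := P) (R := Set.range fun u => y⁻¹ * r u * y)
    hM.isRealAlgebraic ((hrat le_rfl).2 hM.isRational)
    ⟨hP.isRealAlgebraic, (hrat hPM).2 hP.isRational, hPM, hM.le.trans hP.le_normalizer⟩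
    inf_le_right (Set.range_subset_iff.2 hrM) (isPreconnected_range (by fun_prop))
    ⟨0, by simp [hr0]⟩ (fun L hL hPL hRL => hfull L
      ⟨hL.isRealAlgebraic, (hrat hL.le).1 hL.isRational, hL.le, hL.le_normalizer⟩ hPL
      (Set.range_subset_iff.1 hRL)) {h | h ∈ M ∧ y * h ∈ limitSet Γ P F} ?_ hm).2
  exact {
    isClosed := hM.isRealAlgebraic.isClosed.inter
      (isClosed_limitSet.preimage (continuous_const_mul y))
    subset := fun h hh => hh.1
    nonempty := ⟨1, one_mem M, by simpa using hy⟩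
    left_mul := by
      rintro _ ⟨u, rfl⟩ h ⟨hh, hyh⟩
      have hshift := (hrF u).mul_mem_limitSet (fun t => hP.le_normalizer (hFG t)) hyh
      exact ⟨mul_mem (hrM u) hh, by simpa [mul_assoc] using hshift⟩
    mul_mem := fun h hh x hx => ⟨mul_mem hh.1 (hPM hx), by
      simpa [mul_assoc] using mul_mem_limitSet (hΓG.trans hP.le_normalizer) hh.2 hx⟩
    mul_lattice := fun h hh γ hγ => ⟨mul_mem hh.1 hγ.2, by
      simpa [mul_assoc] using mul_lattice_mem_limitSet hh.2 hγ.1⟩ }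

/-- By Baire's theorem, for most `g ∈ G` the conjugates `g⁻¹ (r u) g` lie in no proper rational
subgroup of `M` containing `P`, and such `g` can be moved into the limit set along `M`. -/
theorem subset_limitSet_of_isRationalHull [DiscreteTopology Γ] (hΓG : Γ ≤ G)
    (hG : IsRealAlgebraic G) (hFG : ∀ t, F t ∈ G) (hP : IsRationalNormal Γ G P)
    (hM : IsRationalNormal Γ G M) {r : ℝ → UT n} (hr : Continuous r) (hr0 : r 0 = 1)
    (hrF : ∀ u, IsAsymptoticShift P F (r u))
    (hhull : IsRationalHull Γ (P ∪ {x | ∃ g ∈ G, ∃ u, g⁻¹ * r u * g = x}) M)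
    (hGM : (G : Set (UT n)) ⊆ limitSet Γ M F) : (G : Set (UT n)) ⊆ limitSet Γ P F := by
  have hPM : P ≤ M := fun x hx => hhull.subset (Or.inl hx)
  have hrM : ∀ g ∈ G, ∀ u, g⁻¹ * r u * g ∈ M := fun g hg u => hhull.subset (Or.inr ⟨g, hg, u, rfl⟩)
  let B : Subgroup (UT n) → Set (UT n) := fun L => {g | ∀ u, g⁻¹ * r u * g ∈ L}
  let I : Set (Subgroup (UT n)) := {L | (IsRealAlgebraic L ∧ IsRational Γ L) ∧ P ≤ L ∧ ¬ M ≤ L}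
  have hBclosed : ∀ L ∈ I, IsClosed (B L) := fun L hL => by
    rw [show B L = ⋂ u, (fun g => g⁻¹ * r u * g) ⁻¹' L by ext g; simp [B]]
    exact isClosed_iInter fun u => hL.1.1.isClosed.preimage (by fun_prop)
  have hBline : ∀ L ∈ I, ∀ x ∈ G, ∀ y ∈ G, {t : ℝ | x * (x⁻¹ * y) ^ t ∈ B L}.Infinite → y ∈ B L :=
    fun L hL x _ y _ hinf u => by
      have hpoly : IsPolyMap linePoly fun t => x * (x⁻¹ * y) ^ t :=
        (IsPolyMap.const x).mul (isPolyMap_rpow _)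
      simpa [rpow_one] using hL.1.1.map_mem_of_infinite
        ((hpoly.inv.mul (.const (r u))).mul hpoly) hinf (fun t ht => ht u) 1
  have hBne : ∀ L ∈ I, ¬ (G : Set (UT n)) ⊆ B L := fun L hL hGB => by
    refine hL.2.2 (hhull.le L hL.1.1 hL.1.2 (Set.union_subset hL.2.1 ?_))
    rintro _ ⟨g, hg, u, rfl⟩
    exact hGB hg u
  have hIcount : I.Countable := countable_isRational.mono fun L hL => hL.1
  refine (hG.subset_closure_setOf_notMem hIcount hBclosed hBline hBne).trans
    (closure_minimal ?_ isClosed_limitSet)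
  rintro g ⟨hg, hgB⟩
  obtain ⟨m, hm, hgm⟩ := exists_mul_mem_limitSet (P := P) hM.isRealAlgebraic hM.isRational
    (hΓG.trans hM.le_normalizer) (hGM hg)
  have hmem := mul_mem_limitSet_of_forall_eq hM hP hPM hΓG hFG hr hr0 hrF
    (hrM _ (mul_mem hg (hM.le hm))) hgm (fun L hL hPL hrL => ?_) (inv_mem hm)
  · simpa using hmem
  · by_contra hLM
    refine hgB L ⟨⟨hL.isRealAlgebraic, hL.isRational⟩, hPL, fun h => hLM (hL.le.antisymm h)⟩
      fun u => ?_
    simpa [mul_assoc] using hL.conj_mem hm (hrL u)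

theorem subset_limitSet [DiscreteTopology Γ] (hΓG : Γ ≤ G) (hG : IsRealAlgebraic G)
    (hGΓ : IsRational Γ G) (hF : IsPolyMap linePoly F) (hFG : ∀ t, F t ∈ G) (hF0 : F 0 = 1)
    (hFmin : ∀ L, IsRealAlgebraic L → IsRational Γ L → (∀ t, F t ∈ L) → G ≤ L)
    (hP : IsRationalNormal Γ G P) : (G : Set (UT n)) ⊆ limitSet Γ P F := by
  have hself : (G : Set (UT n)) ⊆ limitSet Γ G F := fun g hg => Set.mem_iInter.2 fun k =>
    subset_closure ⟨k, le_rfl, (F k)⁻¹ * g, mul_mem (inv_mem (hFG k)) hg, 1, one_mem Γ, by group⟩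
  suffices H : ∀ k P, IsRationalNormal Γ G P →
      Module.finrank ℝ (lie G) ≤ Module.finrank ℝ (lie P) + k →
      (G : Set (UT n)) ⊆ limitSet Γ P F from H _ P hP le_add_self
  intro k
  induction k with
  | zero =>
    intro P hP hrank
    obtain rfl : P = G := hP.isRealAlgebraic.eq_of_finrank_lie_le hP.le hrank
    exact hself
  | succ k ih =>
    intro P hP hrank
    by_cases hPG : P = G
    · exact hPG ▸ hself
    have hFP : ∃ t, F t ∉ P := by
      by_contra! h
      exact hPG (hP.le.antisymm (hFmin P hP.isRealAlgebraic hP.isRational h))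
    obtain ⟨r, hr, hr0, hrG, ⟨u, hu⟩, hrF⟩ :=
      exists_isAsymptoticShift hF hG hP.isRealAlgebraic hP.le hP.le_normalizer hFG hF0 hFP
    let S : Set (UT n) := P ∪ {x | ∃ g ∈ G, ∃ u, g⁻¹ * r u * g = x}
    have hSG : S ⊆ G := Set.union_subset hP.le (by
      rintro _ ⟨g, hg, u, rfl⟩
      exact mul_mem (mul_mem (inv_mem hg) (hrG u)) hg)
    have hSconj : ∀ g ∈ G, ∀ x ∈ S, g * x * g⁻¹ ∈ S := by
      rintro g hg x (hx | ⟨h, hh, u, rfl⟩)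
      · exact Or.inl (hP.conj_mem hg hx)
      · exact Or.inr ⟨h * g⁻¹, mul_mem hh (inv_mem hg), u, by group⟩
    obtain ⟨M, hM⟩ := exists_isRationalHull hG hGΓ hSG
    have hMG : IsRationalNormal Γ G M := ⟨hM.isRealAlgebraic, hM.isRational, hM.le G hG hGΓ hSG,
      hM.le_normalizer hG hGΓ hSconj⟩
    have hPM : P < M := lt_of_le_of_ne (fun x hx => hM.subset (Or.inl hx)) fun h =>
      hu (h ▸ hM.subset (Or.inr ⟨1, one_mem G, u, by group⟩))
    have hlt := hP.isRealAlgebraic.finrank_lie_lt hPM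
    exact subset_limitSet_of_isRationalHull hΓG hG hFG hP hMG hr hr0 hrF hM
      (ih M hMG (by omega))

theorem subset_closure_range_mul [DiscreteTopology Γ] (hΓG : Γ ≤ G) (hG : IsRealAlgebraic G)
    (hGΓ : IsRational Γ G) (hF : IsPolyMap linePoly F) (hFG : ∀ t, F t ∈ G) (hF0 : F 0 = 1)
    (hFmin : ∀ L, IsRealAlgebraic L → IsRational Γ L → (∀ t, F t ∈ L) → G ≤ L) :
    (G : Set (UT n)) ⊆ closure (Set.range F * Γ) := by
  have hbot : IsRationalNormal Γ G ⊥ := ⟨.bot, ⟨1, isCompact_singleton, by simp⟩, bot_le,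
    (Subgroup.normalizer_eq_top (⊥ : Subgroup (UT n))).symm ▸ le_top⟩
  refine (subset_limitSet hΓG hG hGΓ hF hFG hF0 hFmin hbot).trans
    ((Set.iInter_subset _ 0).trans (closure_mono ?_))
  rintro _ ⟨t, -, p, hp, γ, hγ, rfl⟩
  obtain rfl : p = 1 := hp
  exact ⟨F t, ⟨t, rfl⟩, γ, hγ, by simp⟩

end UT

/-! ### Polynomial maps and sets of matrices -/

namespace UT

variable {n d : ℕ} {Γ G H L : Subgroup (UT n)}

theorem IsRational.mono {Δ : Subgroup (UT n)} (hΓL : IsRational Γ L) (h : Γ ≤ Δ) :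
    IsRational Δ L := by
  obtain ⟨K, hK, hLK⟩ := hΓL
  exact ⟨K, hK, hLK.trans (Set.mul_subset_mul_left (inf_le_inf_right L h))⟩

theorem IsRational.isClosed_mul [DiscreteTopology Γ] (hΓL : IsRational Γ L)
    (hL : IsRealAlgebraic L) : IsClosed ((L : Set (UT n)) * (Γ : Set (UT n))) := by
  obtain ⟨K, hKL, hK, hLK⟩ := hΓL.exists_isCompact_subset hL
  suffices h : (L : Set (UT n)) * (Γ : Set (UT n)) = K * (Γ : Set (UT n)) from
    h ▸ Γ.isClosed_of_discrete.mul_left_of_isCompact hK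
  refine (Set.mul_subset_iff.2 fun g hg γ hγ => ?_).antisymm (Set.mul_subset_mul_right hKL)
  obtain ⟨k, hk, δ, hδ, rfl⟩ := hLK hg
  exact ⟨k, hk, δ * γ, mul_mem hδ.1 hγ, (mul_assoc k δ γ).symm⟩

theorem IsPolyMap.comp_smul {f : (Fin d → ℝ) → UT n} (hf : IsPolyMap (affinePoly d) f)
    (v : Fin d → ℝ) : IsPolyMap linePoly fun s : ℝ => f (s • v) :=
  hf.comp fun i => linePoly.mul_mem id_mem_linePoly (linePoly.algebraMap_mem (v i))

theorem IsRationalHull.exists_range_comp_smul [DiscreteTopology Γ] {f : (Fin d → ℝ) → UT n}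
    (hL : IsRationalHull Γ (Set.range f) L) (hf : IsPolyMap (affinePoly d) f) :
    ∃ v : Fin d → ℝ, IsRationalHull Γ (Set.range fun s : ℝ => f (s • v)) L := by
  let I : Set (Subgroup (UT n)) := {M | (IsRealAlgebraic M ∧ IsRational Γ M) ∧ ¬ L ≤ M}
  let B : Subgroup (UT n) → Set (Fin d → ℝ) := fun M => {v | ∀ s : ℝ, f (s • v) ∈ M}
  have hcont : Continuous f := continuous_iff.2 <| continuous_matrix fun i j =>
    continuous_of_mem_polyFun (hf i j) continuous_apply
  have hBclosed : ∀ M ∈ I, IsClosed (B M) := fun M hM => by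
    rw [show B M = ⋂ s : ℝ, (fun v => f (s • v)) ⁻¹' M by ext v; simp [B]]
    exact isClosed_iInter fun s => hM.1.1.isClosed.preimage (hcont.comp (continuous_const_smul s))
  have hBline : ∀ M ∈ I, ∀ x y, ∃ γ : ℝ → Fin d → ℝ, Continuous γ ∧ γ 0 = x ∧
      ({t | γ t ∈ B M}.Infinite → y ∈ B M) := fun M hM x y => by
    refine ⟨fun t => x + t • (y - x), by fun_prop, by simp, fun hinf s => ?_⟩
    have hpoly : IsPolyMap linePoly fun t : ℝ => f (s • (x + t • (y - x))) :=
      hf.comp fun i => linePoly.mul_mem (linePoly.algebraMap_mem s)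
        (linePoly.add_mem (linePoly.algebraMap_mem (x i))
          (linePoly.mul_mem id_mem_linePoly (linePoly.algebraMap_mem ((y - x) i))))
    simpa using hM.1.1.map_mem_of_infinite hpoly hinf (fun t ht => ht s) 1
  have hBne : ∀ M ∈ I, ∃ v, v ∉ B M := fun M hM => by
    by_contra! h
    refine hM.2 (hL.le M hM.1.1 hM.1.2 (Set.range_subset_iff.2 fun x => ?_))
    simpa using h x 1
  obtain ⟨v, hv⟩ := (dense_setOf_forall_notMem
    (countable_isRational.mono fun M (hM : M ∈ I) => hM.1) hBclosed hBline hBne).nonempty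
  refine ⟨v, hL.isRealAlgebraic, hL.isRational,
    Set.range_subset_iff.2 fun s => hL.subset ⟨_, rfl⟩, fun M hM hMΓ hMv => ?_⟩
  by_contra hLM
  exact hv M ⟨⟨hM, hMΓ⟩, hLM⟩ (Set.range_subset_iff.1 hMv)

theorem IsRationalHull.closure_range_mul [DiscreteTopology Γ] {f : (Fin d → ℝ) → UT n}
    (hL : IsRationalHull Γ (Set.range f) L) (hf : IsPolyMap (affinePoly d) f) (hf0 : f 0 = 1) :
    closure (Set.range f * (Γ : Set (UT n))) = L * (Γ : Set (UT n)) := by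
  refine (closure_minimal (Set.mul_subset_mul_right hL.subset)
    (hL.isRational.isClosed_mul hL.isRealAlgebraic)).antisymm ?_
  obtain ⟨v, hv⟩ := hL.exists_range_comp_smul hf
  have : DiscreteTopology (Γ ⊓ L : Subgroup (UT n)) :=
    .of_subset (s := (Γ : Set (UT n))) inferInstance inf_le_left
  have hline : (L : Set (UT n)) ⊆
      closure (Set.range (fun s : ℝ => f (s • v)) * (Γ ⊓ L : Subgroup (UT n))) :=
    subset_closure_range_mul inf_le_right hL.isRealAlgebraic
      ((isRational_inf_iff le_rfl).2 hL.isRational) (hf.comp_smul v)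
      (Set.range_subset_iff.1 hv.subset) (by simp [hf0]) fun M hM hMΓ hMv =>
        hv.le M hM (hMΓ.mono inf_le_left) (Set.range_subset_iff.2 hMv)
  rintro _ ⟨x, hx, γ, hγ, rfl⟩
  refine map_mem_closure (f := (· * γ)) (continuous_mul_const γ) (hline hx) ?_
  rintro _ ⟨_, ⟨s, rfl⟩, δ, hδ, rfl⟩
  exact ⟨f (s • v), ⟨_, rfl⟩, δ * γ, mul_mem hδ.1 hγ, (mul_assoc _ δ γ).symm⟩

/-- The coset `gH` contains `X`, and it is contained in every coset `aL` containing `X` with `a ∈ G`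
and `L` a real algebraic subgroup of `G`. -/
structure IsMinimalCoset (G : Subgroup (UT n)) (X : Set (UT n)) (g : UT n) (H : Subgroup (UT n)) :
    Prop where
  subset : X ⊆ g • (H : Set (UT n))
  le : ∀ a ∈ G, ∀ L ≤ G, IsRealAlgebraic L → X ⊆ a • (L : Set (UT n)) →
    g • (H : Set (UT n)) ⊆ a • (L : Set (UT n))

namespace IsMinimalCoset

variable {X : Set (UT n)} {g x y : UT n}

theorem inv_mul_mem (hX : IsMinimalCoset G X g H) (hx : x ∈ X) (hy : y ∈ X) : x⁻¹ * y ∈ H := by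
  have hxH : g⁻¹ * x ∈ H := (mem_leftCoset_iff g).1 (hX.subset hx)
  have hyH : g⁻¹ * y ∈ H := (mem_leftCoset_iff g).1 (hX.subset hy)
  simpa [mul_assoc] using mul_mem (inv_mem hxH) hyH

theorem le_of_forall_inv_mul_mem (hX : IsMinimalCoset G X g H) (hG : IsRealAlgebraic G)
    (hXG : X ⊆ G) (hL : IsRealAlgebraic L) (hx : x ∈ X) (h : ∀ y ∈ X, x⁻¹ * y ∈ L) : H ≤ L := by
  have hcoset : g • (H : Set (UT n)) ⊆ x • (L ⊓ G : Subgroup (UT n)) :=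
    hX.le x (hXG hx) (L ⊓ G) inf_le_right (hL.inf hG) fun y hy =>
      (mem_leftCoset_iff x).2 ⟨h y hy, G.mul_mem (G.inv_mem (hXG hx)) (hXG hy)⟩
  have hmem : ∀ y ∈ H, x⁻¹ * (g * y) ∈ L := fun y hy =>
    ((mem_leftCoset_iff x).1 (hcoset (Set.smul_mem_smul_set hy))).1
  intro y hy
  simpa [mul_assoc] using mul_mem (inv_mem (hmem 1 (one_mem H))) (hmem y hy)

theorem closure_range_mul [DiscreteTopology Γ] {F : (Fin d → ℝ) → UT n}
    (hX : IsMinimalCoset G (Set.range F) g H) (hF : IsPolyMap (affinePoly d) F)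
    (hFG : Set.range F ⊆ G) (hG : IsRealAlgebraic G) (hL : IsRationalHull Γ H L) :
    closure (Set.range F * (Γ : Set (UT n))) = g • (L : Set (UT n)) * (Γ : Set (UT n)) := by
  have hhull : IsRationalHull Γ (Set.range fun x => (F 0)⁻¹ * F x) L :=
    { isRealAlgebraic := hL.isRealAlgebraic
      isRational := hL.isRational
      subset := Set.range_subset_iff.2 fun x => hL.subset (hX.inv_mul_mem ⟨0, rfl⟩ ⟨x, rfl⟩)
      le := fun M hM hΓM hfM => hL.le M hM hΓM <|
        hX.le_of_forall_inv_mul_mem hG hFG hM ⟨0, rfl⟩ (Set.forall_mem_range.2 fun x =>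
          hfM ⟨x, rfl⟩) }
  have hrange : Set.range F = F 0 • Set.range fun x => (F 0)⁻¹ * F x := by
    rw [← Set.image_smul, ← Set.range_comp]
    simp [Function.comp_def]
  have hcoset : F 0 • (L : Set (UT n)) = g • (L : Set (UT n)) :=
    ((leftCoset_eq_iff L).2 (hL.subset ((mem_leftCoset_iff g).1 (hX.subset ⟨0, rfl⟩)))).symm
  rw [hrange, smul_mul_assoc, closure_smul,
    hhull.closure_range_mul ((IsPolyMap.const _).mul hF) (inv_mul_cancel _), ← smul_mul_assoc,
    hcoset]

end IsMinimalCoset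

end UT

/-! ### Sets of matrices and subgroups of `UT(n,ℝ)` -/

namespace UT

variable {n d : ℕ} {Γ G H L : Subgroup (UT n)}

theorem isRealAlgebraic_iff :
    IsRealAlgebraic L ↔ ∃ S ⊆ (coordRing n : Set (UT n → ℝ)), ∀ g, g ∈ L ↔ ∀ f ∈ S, f g = 0 := by
  refine ⟨fun hL => ?_, fun ⟨S, hS, hL⟩ => ⟨?_, fun g hg t => (hL _).2 fun f hf => ?_⟩⟩
  · refine ⟨{f | f ∈ coordRing n ∧ ∀ x ∈ L, f x = 0}, fun f hf => hf.1, fun g =>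
      ⟨fun hg f hf => hf.2 g hg, fun h => hL.mem_of_forall_linear fun l hl =>
        h _ ⟨isPolyMap_id.linear_log_mem l, hl⟩⟩⟩
  · rw [show (L : Set (UT n)) = ⋂ f ∈ S, {g | f g = 0} by ext; simp [hL]]
    exact isClosed_biInter fun f hf =>
      isClosed_eq (continuous_of_mem_coordRing (hS hf)) continuous_const
  · refine eq_zero_of_mem_linePoly ((isPolyMap_rpow g).comp_mem (hS hf))
      (Set.infinite_range_of_injective (Nat.cast_injective (R := ℝ)))
      (Set.forall_mem_range.2 fun k => ?_) t
    rw [rpow_natCast]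
    exact (hL _).1 (pow_mem hg k) f hf

theorem mem_coordRing_iff {f : UT n → ℝ} :
    f ∈ coordRing n ↔ ∃ p, ∀ g, f g = MvPolynomial.eval (matEval (toMatrix g)) p :=
  mem_polyFun_iff

theorem exists_image_toMatrix_eq_iff {S : Set (Mat n ℝ)} :
    (∃ L : Subgroup (UT n), toMatrix '' (L : Set (UT n)) = S) ↔ S ⊆ UTset n ∧ 1 ∈ S ∧
      (∀ a ∈ S, ∀ b ∈ S, a * b ∈ S) ∧ ∀ a ∈ S, a⁻¹ ∈ S := by
  refine ⟨?_, fun ⟨hS, h1, hmul, hinv⟩ => ?_⟩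
  · rintro ⟨L, rfl⟩
    refine ⟨Set.image_subset_iff.2 fun g _ => toMatrix_mem g, ⟨1, one_mem L, map_one _⟩, ?_, ?_⟩
    · rintro _ ⟨a, ha, rfl⟩ _ ⟨b, hb, rfl⟩
      exact ⟨a * b, mul_mem ha hb, map_mul _ a b⟩
    · rintro _ ⟨a, ha, rfl⟩
      exact ⟨a⁻¹, inv_mem ha, toMatrix_inv a⟩
  · let L : Subgroup (UT n) :=
      { carrier := toMatrix ⁻¹' S
        one_mem' := h1
        mul_mem' := fun ha hb => hmul _ ha _ hb
        inv_mem' := fun {a} ha => show toMatrix a⁻¹ ∈ S from toMatrix_inv a ▸ hinv _ ha }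
    exact ⟨L, Set.image_preimage_eq_of_subset fun A hA => ⟨ofMatrix A (hS hA), rfl⟩⟩

theorem image_toMatrix_subset_iff {S T : Set (UT n)} : toMatrix '' S ⊆ toMatrix '' T ↔ S ⊆ T :=
  Set.image_subset_image_iff toMatrix_injective

theorem isRealUnipotentGroup_iff {S : Set (Mat n ℝ)} :
    IsRealUnipotentGroup n S ↔
      ∃ L : Subgroup (UT n), IsRealAlgebraic L ∧ toMatrix '' (L : Set (UT n)) = S := by
  constructor
  · rintro ⟨⟨P, rfl⟩, h1, hmul, hinv⟩
    obtain ⟨L, hL⟩ := exists_image_toMatrix_eq_iff.2 ⟨fun A hA => hA.1, h1, hmul, hinv⟩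
    refine ⟨L, isRealAlgebraic_iff.2
      ⟨(fun p g => MvPolynomial.eval (matEval (toMatrix g)) p) '' P, ?_, fun g => ?_⟩, hL⟩
    · exact Set.image_subset_iff.2 fun p _ => mem_coordRing_iff.2 ⟨p, fun _ => rfl⟩
    · rw [Set.forall_mem_image, ← SetLike.mem_coe, ← toMatrix_injective.mem_set_image, hL]
      exact and_iff_right (toMatrix_mem g)
  · rintro ⟨L, hL, rfl⟩
    obtain ⟨S, hS, hLS⟩ := isRealAlgebraic_iff.1 hL
    refine ⟨⟨{p | ∀ g ∈ L, MvPolynomial.eval (matEval (toMatrix g)) p = 0}, ?_⟩,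
      (exists_image_toMatrix_eq_iff.1 ⟨L, rfl⟩).2⟩
    refine Set.Subset.antisymm ?_ fun A ⟨hA, hAp⟩ =>
      ⟨ofMatrix A hA, (hLS _).2 fun f hf => ?_, rfl⟩
    · rintro _ ⟨g, hg, rfl⟩
      exact ⟨toMatrix_mem g, fun p hp => hp g hg⟩
    · obtain ⟨p, hp⟩ := mem_coordRing_iff.1 (hS hf)
      rw [hp]
      exact hAp p fun g hg => by rw [← hp, (hLS g).1 hg f hf]

theorem discreteTopology_image_toMatrix_iff {S : Set (UT n)} :
    DiscreteTopology (toMatrix '' S) ↔ DiscreteTopology S :=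
  (isClosedEmbedding_toMatrix.isEmbedding.homeomorphImage S).discreteTopology_iff.symm

theorem isLatticeIn_iff {Λ : Set (Mat n ℝ)} (hL : IsRealAlgebraic L) :
    IsLatticeIn n (toMatrix '' (L : Set (UT n))) Λ ↔ ∃ Γ : Subgroup (UT n), Γ ≤ L ∧
      DiscreteTopology Γ ∧ IsRational Γ L ∧ toMatrix '' (Γ : Set (UT n)) = Λ := by
  constructor
  · rintro ⟨hsub, h1, hmul, hinv, hdisc, K, hKL, hK, hcover⟩
    obtain ⟨Γ, rfl⟩ := exists_image_toMatrix_eq_iff.2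
      ⟨hsub.trans (Set.image_subset_iff.2 fun g _ => toMatrix_mem g), h1, hmul, hinv⟩
    have hΓL : Γ ≤ L := image_toMatrix_subset_iff.1 hsub
    refine ⟨Γ, hΓL, discreteTopology_image_toMatrix_iff.1 hdisc,
      ⟨toMatrix ⁻¹' K, isClosedEmbedding_toMatrix.isCompact_preimage hK, fun g hg => ?_⟩, rfl⟩
    obtain ⟨_, hk, _, ⟨γ, hγ, rfl⟩, hkγ⟩ := hcover _ ⟨g, hg, rfl⟩
    obtain ⟨k, -, rfl⟩ := hKL hk
    exact ⟨k, hk, γ, ⟨hγ, hΓL hγ⟩, toMatrix_injective (by rw [hkγ, map_mul])⟩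
  · rintro ⟨Γ, hΓL, hdisc, hrat, rfl⟩
    obtain ⟨K, hKL, hK, hcover⟩ := hrat.exists_isCompact_subset hL
    obtain ⟨-, h1, hmul, hinv⟩ := exists_image_toMatrix_eq_iff.1 ⟨Γ, rfl⟩
    refine ⟨Set.image_mono hΓL, h1, hmul, hinv, discreteTopology_image_toMatrix_iff.2 hdisc,
      toMatrix '' K, Set.image_mono hKL, hK.image continuous_toMatrix, ?_⟩
    rintro _ ⟨g, hg, rfl⟩
    obtain ⟨k, hk, γ, hγ, rfl⟩ := hcover hg
    exact ⟨_, ⟨k, hk, rfl⟩, _, ⟨γ, hγ.1, rfl⟩, map_mul _ k γ⟩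

theorem isRationalFor_iff [DiscreteTopology Γ] (hL : IsRealAlgebraic L) :
    IsRationalFor n (toMatrix '' (Γ : Set (UT n))) (toMatrix '' (L : Set (UT n))) ↔
      IsRational Γ L := by
  rw [IsRationalFor, ← Set.image_inter toMatrix_injective, ← Subgroup.coe_inf, isLatticeIn_iff hL]
  constructor
  · rintro ⟨Δ, -, -, hΔ, hΔΓ⟩
    rw [SetLike.coe_injective (toMatrix_injective.image_injective hΔΓ)] at hΔ
    exact hΔ.mono inf_le_left
  · exact fun h => ⟨Γ ⊓ L, inf_le_right,
      .of_subset (s := (Γ : Set (UT n))) inferInstance inf_le_left,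
      (isRational_inf_iff le_rfl).2 h, rfl⟩

theorem isRealAlgSubgroup_iff {S : Set (Mat n ℝ)} :
    IsRealAlgSubgroup n (toMatrix '' (G : Set (UT n))) S ↔
      ∃ L ≤ G, IsRealAlgebraic L ∧ toMatrix '' (L : Set (UT n)) = S := by
  constructor
  · rintro ⟨hSG, hS⟩
    obtain ⟨L, hL, rfl⟩ := isRealUnipotentGroup_iff.1 hS
    exact ⟨L, image_toMatrix_subset_iff.1 hSG, hL, rfl⟩
  · rintro ⟨L, hLG, hL, rfl⟩
    exact ⟨Set.image_mono hLG, isRealUnipotentGroup_iff.2 ⟨L, hL, rfl⟩⟩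

theorem image_toMatrix_smul (g : UT n) (S : Set (UT n)) :
    toMatrix '' (g • S) = {toMatrix g} * toMatrix '' S := by
  rw [← Set.image_singleton, ← Set.image_mul, ← Set.singleton_smul, smul_eq_mul]

theorem isPolyMapVec_toMatrix_iff {F : (Fin d → ℝ) → UT n} :
    IsPolyMapVec d n (fun x => toMatrix (F x)) ↔ IsPolyMap (affinePoly d) F := by
  refine ⟨fun ⟨P, hP⟩ i j => mem_polyFun_iff.2 ⟨P i j, fun x => hP x i j⟩, fun hF => ?_⟩
  choose P hP using fun i j => mem_polyFun_iff.1 (hF i j)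
  exact ⟨P, fun x i j => hP i j x⟩

theorem isMinimalCoset_iff {X : Set (UT n)} {g : UT n} :
    IsMinimalCoset G X g H ↔ toMatrix '' X ⊆ {toMatrix g} * toMatrix '' (H : Set (UT n)) ∧
      ∀ a ∈ toMatrix '' (G : Set (UT n)), ∀ S : Set (Mat n ℝ),
        IsRealAlgSubgroup n (toMatrix '' (G : Set (UT n))) S → toMatrix '' X ⊆ {a} * S →
          {toMatrix g} * toMatrix '' (H : Set (UT n)) ⊆ {a} * S := by
  simp only [← image_toMatrix_smul, image_toMatrix_subset_iff, Set.forall_mem_image,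
    isRealAlgSubgroup_iff]
  constructor
  · rintro ⟨hsub, hle⟩
    refine ⟨hsub, ?_⟩
    rintro a ha _ ⟨L, hLG, hL, rfl⟩ hXL
    rw [← image_toMatrix_smul, image_toMatrix_subset_iff] at hXL ⊢
    exact hle a ha L hLG hL hXL
  · rintro ⟨hsub, hle⟩
    refine ⟨hsub, fun a ha L hLG hL => ?_⟩
    have hL' := hle ha _ ⟨L, hLG, hL, rfl⟩
    rwa [← image_toMatrix_smul, image_toMatrix_subset_iff, image_toMatrix_subset_iff] at hL'

end UT

/-- closure of the image of a polynomial map in a nilmanifold. -/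
theorem stmt0 {n d : ℕ} (G : Set (Mat n ℝ)) (hG : IsRealUnipotentGroup n G)
    (F : (Fin d → ℝ) → Mat n ℝ) (hFpoly : IsPolyMapVec d n F) (hFG : ∀ x, F x ∈ G)
    (X : Set (Mat n ℝ)) (hX : X = Set.range F)
    (g : Mat n ℝ) (hg : g ∈ G) (H : Set (Mat n ℝ)) (hH : IsRealAlgSubgroup n G H)
    (hXgH : X ⊆ {g} * H)
    (hmin : ∀ g' ∈ G, ∀ H' : Set (Mat n ℝ), IsRealAlgSubgroup n G H' → X ⊆ {g'} * H' →
      {g} * H ⊆ {g'} * H')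
    (Γ : Set (Mat n ℝ)) (hΓ : IsLatticeIn n G Γ) :
    ∃ H₀ : Set (Mat n ℝ), IsRealAlgSubgroup n G H₀ ∧ H ⊆ H₀ ∧ IsRationalFor n Γ H₀ ∧
      (∀ L : Set (Mat n ℝ), IsRealAlgSubgroup n G L → IsRationalFor n Γ L → H ⊆ L → H₀ ⊆ L) ∧
      closure (X * Γ) = {g} * H₀ * Γ := by
  obtain ⟨G, hGalg, rfl⟩ := UT.isRealUnipotentGroup_iff.1 hG
  obtain ⟨Γ, -, _, hΓG, rfl⟩ := (UT.isLatticeIn_iff hGalg).1 hΓ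
  obtain ⟨H, hHG, -, rfl⟩ := UT.isRealAlgSubgroup_iff.1 hH
  obtain ⟨g, -, rfl⟩ := hg
  choose F' hF'G hF' using hFG
  obtain rfl : (fun x => UT.toMatrix (F' x)) = F := funext hF'
  obtain rfl : X = UT.toMatrix '' Set.range F' := hX.trans (Set.range_comp UT.toMatrix F')
  have hcoset : UT.IsMinimalCoset G (Set.range F') g H := UT.isMinimalCoset_iff.2 ⟨hXgH, hmin⟩
  obtain ⟨H₀, hH₀⟩ := UT.exists_isRationalHull hGalg hΓG hHG
  have hclosure := hcoset.closure_range_mul (UT.isPolyMapVec_toMatrix_iff.1 hFpoly)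
    (Set.range_subset_iff.2 hF'G) hGalg hH₀
  refine ⟨UT.toMatrix '' H₀, UT.isRealAlgSubgroup_iff.2
      ⟨H₀, hH₀.le G hGalg hΓG hHG, hH₀.isRealAlgebraic, rfl⟩, Set.image_mono hH₀.subset,
    (UT.isRationalFor_iff hH₀.isRealAlgebraic).2 hH₀.isRational, fun L hL hΓL hHL => ?_, ?_⟩
  · obtain ⟨L, -, hLalg, rfl⟩ := UT.isRealAlgSubgroup_iff.1 hL
    exact Set.image_mono (hH₀.le L hLalg ((UT.isRationalFor_iff hLalg).1 hΓL)
      (UT.image_toMatrix_subset_iff.1 hHL))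
  · rw [← UT.image_toMatrix_smul, ← Set.image_mul, ← Set.image_mul,
      UT.isClosedEmbedding_toMatrix.closure_image_eq, hclosure]
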